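/- Let s ∈ [0,1] and p ∈ (2,∞). There is a constant C = C(s,p) such that for every Schwartz function G : ℂ → ℂ and every k ∈ ℂ, ‖∂̄⁻¹[e_{−k} G]‖_{L^p(ℂ)} ≤ C (1+|k|)^{−s} ( ‖G‖_{L^{2p/(p+2)}(ℂ)} + ‖D^s G‖_{L^{2p/(p+2)}(ℂ)} ). -/

import Mathlib

open MeasureTheory Complex ComplexConjugate Filter Bornology
open scoped ENNReal Topology SchwartzMap

noncomputable section

/-- `e_k(z) = exp(i(conj k · z + k · conj z)/2)`. -/
def ek (k z : ℂ) : ℂ := Complex.exp (Complex.I * (conj k * z + k * conj z) / 2)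

/-- The solid Cauchy transform `∂̄⁻¹[h](z) = (1/π) ∫ h(w)/(z-w) dA(w)`. -/
def dbarInv (h : ℂ → ℂ) (z : ℂ) : ℂ := (Real.pi : ℂ)⁻¹ * ∫ w : ℂ, h w / (z - w)

/-- The solid Cauchy transform `∂_z⁻¹[h](z) = (1/π) ∫ h(w)/(conj z - conj w) dA(w)`. -/
def dzInv (h : ℂ → ℂ) (z : ℂ) : ℂ := (Real.pi : ℂ)⁻¹ * ∫ w : ℂ, h w / (conj z - conj w)

/-- The operator `S^k_q[F] = ∂̄⁻¹[e_{-k} q ∂_z⁻¹[e_k conj(q) F]]`. -/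
def Sk (k : ℂ) (q F : ℂ → ℂ) : ℂ → ℂ :=
  dbarInv fun z => ek (-k) z * q z * dzInv (fun w => ek k w * conj (q w) * F w) z

/-- The Fourier transform on `ℂ ≅ ℝ²`. -/
def FT (f : ℂ → ℂ) (ξ : ℂ) : ℂ :=
  ∫ z : ℂ, Complex.exp (-(2 * Real.pi * Complex.I) * ((z.re * ξ.re + z.im * ξ.im : ℝ) : ℂ)) * f z

/-- The inverse Fourier transform on `ℂ ≅ ℝ²`. -/
def FTinv (f : ℂ → ℂ) (x : ℂ) : ℂ :=
  ∫ ξ : ℂ, Complex.exp ((2 * Real.pi * Complex.I) * ((x.re * ξ.re + x.im * ξ.im : ℝ) : ℂ)) * f ξ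

/-- `D^s`, the Fourier multiplier with symbol `|ξ|^s`. -/
def Ds (s : ℝ) (f : ℂ → ℂ) : ℂ → ℂ :=
  FTinv fun ξ => ((‖ξ‖ ^ s : ℝ) : ℂ) * FT f ξ

/-- The weighted Sobolev norm
`‖q‖_{H^{s,s}} = max {‖q‖₂, ‖D^s q‖₂, ‖|·|^s q‖₂}`, where by Plancherel
`‖D^s q‖₂ = ‖ |ξ|^s (FT q)(ξ) ‖₂`. -/
def HssNorm (s : ℝ) (q : ℂ → ℂ) : ℝ≥0∞ :=
  max (eLpNorm q 2 volume)
    (max (eLpNorm (fun ξ : ℂ => ((‖ξ‖ ^ s : ℝ) : ℂ) * FT q ξ) 2 volume)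
      (eLpNorm (fun z : ℂ => ((‖z‖ ^ s : ℝ) : ℂ) * q z) 2 volume))

/-- The Cauchy–Riemann operator `∂̄ = (∂/∂z₁ + i ∂/∂z₂)/2`. -/
def dbar (G : ℂ → ℂ) (z : ℂ) : ℂ := (fderiv ℝ G z 1 + Complex.I * fderiv ℝ G z Complex.I) / 2

end

theorem lintegral_Ioc_ofReal_rpow {a R : ℝ} (ha : -1 < a) (hR : 0 ≤ R) :
    ∫⁻ r in Set.Ioc 0 R, ENNReal.ofReal (r ^ a) = ENNReal.ofReal (R ^ (a + 1) / (a + 1)) := by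
  have hint : IntegrableOn (fun r : ℝ => r ^ a) (Set.Ioc 0 R) := by
    have := intervalIntegral.intervalIntegrable_rpow' (a := 0) (b := R) ha
    rwa [intervalIntegrable_iff_integrableOn_Ioc_of_le hR] at this
  rw [← ofReal_integral_eq_lintegral_ofReal hint]
  · rw [← intervalIntegral.integral_of_le hR, integral_rpow (Or.inl ha),
      Real.zero_rpow (by linarith), sub_zero]
  · filter_upwards [ae_restrict_mem measurableSet_Ioc] with r hr
    exact Real.rpow_nonneg hr.1.le _

theorem lintegral_Ioi_ofReal_rpow {a R : ℝ} (ha : a < -1) (hR : 0 < R) :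
    ∫⁻ r in Set.Ioi R, ENNReal.ofReal (r ^ a) = ENNReal.ofReal (-R ^ (a + 1) / (a + 1)) := by
  rw [← ofReal_integral_eq_lintegral_ofReal (integrableOn_Ioi_rpow_of_lt ha hR),
    integral_Ioi_rpow_of_lt ha hR]
  filter_upwards [ae_restrict_mem measurableSet_Ioi] with r hr
  exact Real.rpow_nonneg (hR.trans hr).le _

theorem lintegral_radial {g : ℝ → ℝ≥0∞} (hg : Measurable g) :
    ∫⁻ z : ℂ, g ‖z‖ =
      ENNReal.ofReal (2 * Real.pi) * ∫⁻ r in Set.Ioi (0 : ℝ), ENNReal.ofReal r * g r := by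
  rw [← Complex.lintegral_comp_polarCoord_symm]
  have h1 : ∀ p ∈ polarCoord.target,
      ENNReal.ofReal p.1 • g ‖Complex.polarCoord.symm p‖ = ENNReal.ofReal p.1 * g p.1 := by
    intro p hp
    rw [polarCoord_target] at hp
    rw [Complex.norm_polarCoord_symm, abs_of_pos hp.1, smul_eq_mul]
  rw [setLIntegral_congr_fun polarCoord.open_target.measurableSet h1, polarCoord_target,
    Measure.volume_eq_prod, ← Measure.prod_restrict,
    lintegral_prod _ (by fun_prop)]
  simp only [lintegral_const, Measure.restrict_apply MeasurableSet.univ, Set.univ_inter,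
    Real.volume_Ioo]
  rw [lintegral_mul_const _ (by fun_prop), mul_comm]
  congr 2
  ring

theorem lintegral_inv_enorm_near (R : ℝ) :
    ∫⁻ w : ℂ, (if ‖w‖ ≤ R then ‖w‖ₑ⁻¹ else 0) = ENNReal.ofReal (2 * Real.pi * R) := by
  have h0 : ∀ w : ℂ, (if ‖w‖ ≤ R then ‖w‖ₑ⁻¹ else 0)
      = (fun r : ℝ => if r ≤ R then ‖r‖ₑ⁻¹ else 0) ‖w‖ := by intro w; simp
  rw [lintegral_congr h0, lintegral_radial (g := fun r : ℝ => if r ≤ R then ‖r‖ₑ⁻¹ else 0)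
    (Measurable.ite measurableSet_Iic (by fun_prop) (by fun_prop))]
  have h1 : ∀ r ∈ Set.Ioi (0 : ℝ), ENNReal.ofReal r * (if r ≤ R then ‖r‖ₑ⁻¹ else 0)
      = (Set.Ioc 0 R).indicator 1 r := by
    intro r hr
    have hr' : (0 : ℝ) < r := hr
    by_cases h : r ≤ R
    · rw [if_pos h, Set.indicator_of_mem (Set.mem_Ioc.2 ⟨hr', h⟩), Real.enorm_of_nonneg hr'.le]
      exact ENNReal.mul_inv_cancel (by simpa using hr') ENNReal.ofReal_ne_top
    · rw [if_neg h, Set.indicator_of_notMem (fun h' => h (Set.mem_Ioc.1 h').2), mul_zero]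
  rw [setLIntegral_congr_fun measurableSet_Ioi h1, lintegral_indicator_one measurableSet_Ioc,
    Measure.restrict_apply measurableSet_Ioc, Set.inter_eq_left.2 Set.Ioc_subset_Ioi_self,
    Real.volume_Ioc, sub_zero, ← ENNReal.ofReal_mul (by positivity)]

theorem lintegral_inv_enorm_far {R b : ℝ} (hR : 0 < R) (hb : 2 < b) :
    ∫⁻ w : ℂ, (if ‖w‖ ≤ R then 0 else ‖w‖ₑ⁻¹) ^ b
      = ENNReal.ofReal (2 * Real.pi * (R ^ (2 - b) / (b - 2))) := by
  have h0 : ∀ w : ℂ, (if ‖w‖ ≤ R then 0 else ‖w‖ₑ⁻¹) ^ b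
      = (fun r : ℝ => (if r ≤ R then 0 else ‖r‖ₑ⁻¹) ^ b) ‖w‖ := by intro w; simp
  rw [lintegral_congr h0, lintegral_radial
    (g := fun r : ℝ => (if r ≤ R then 0 else ‖r‖ₑ⁻¹) ^ b)
    ((Measurable.ite measurableSet_Iic (by fun_prop) (by fun_prop)).pow_const _)]
  have h1 : ∀ r ∈ Set.Ioi (0 : ℝ), ENNReal.ofReal r * (if r ≤ R then 0 else ‖r‖ₑ⁻¹) ^ b
      = (Set.Ioi R).indicator (fun r => ENNReal.ofReal (r ^ (1 - b))) r := by
    intro r hr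
    have hr' : (0 : ℝ) < r := hr
    by_cases h : r ≤ R
    · rw [if_pos h, Set.indicator_of_notMem (by simpa using h),
        ENNReal.zero_rpow_of_pos (by linarith), mul_zero]
    · rw [if_neg h, Set.indicator_of_mem (by simpa using h),
        Real.enorm_of_nonneg hr'.le,
        ← ENNReal.ofReal_inv_of_pos hr', ENNReal.ofReal_rpow_of_pos (by positivity),
        ← ENNReal.ofReal_mul hr'.le, Real.inv_rpow hr'.le, Real.rpow_sub hr', Real.rpow_one]
      rfl
  rw [setLIntegral_congr_fun measurableSet_Ioi h1, lintegral_indicator measurableSet_Ioi,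
    Measure.restrict_restrict measurableSet_Ioi,
    Set.inter_eq_left.2 (Set.Ioi_subset_Ioi hR.le),
    lintegral_Ioi_ofReal_rpow (by linarith) hR, ← ENNReal.ofReal_mul (by positivity)]
  congr 2
  rw [show 1 - b + 1 = -(b - 2) by ring, neg_div_neg_eq]
  congr 2; ring

/-- Beta-type bound. -/
theorem lintegral_rpow_mul_add_rpow_le {σ b : ℝ} (hσ : 0 < σ) (hb : σ < b) {a : ℝ} (ha : 0 < a) :
    ∫⁻ τ in Set.Ioi (0 : ℝ), ENNReal.ofReal (τ ^ (σ - 1)) * ENNReal.ofReal ((τ + a) ^ (-b))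
      ≤ ENNReal.ofReal ((1 / σ + 1 / (b - σ)) * a ^ (σ - b)) := by
  rw [← Set.Ioc_union_Ioi_eq_Ioi ha.le]
  refine (lintegral_union_le _ _ _).trans ?_
  have e1 : ∫⁻ τ in Set.Ioc 0 a, ENNReal.ofReal (τ ^ (σ - 1)) * ENNReal.ofReal ((τ + a) ^ (-b))
      ≤ ENNReal.ofReal (1 / σ * a ^ (σ - b)) := by
    calc _ ≤ ∫⁻ τ in Set.Ioc 0 a, ENNReal.ofReal (τ ^ (σ - 1)) * ENNReal.ofReal (a ^ (-b)) := by
            refine setLIntegral_mono' measurableSet_Ioc fun τ hτ => ?_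
            refine mul_le_mul' le_rfl (ENNReal.ofReal_le_ofReal ?_)
            have hb0 : -b ≤ 0 := by linarith
            exact Real.rpow_le_rpow_of_nonpos ha (by linarith [hτ.1]) hb0
      _ = _ := by
            rw [lintegral_mul_const _ (by fun_prop), lintegral_Ioc_ofReal_rpow (by linarith) ha.le,
              ← ENNReal.ofReal_mul (by rw [sub_add_cancel]; positivity), sub_add_cancel,
              sub_eq_add_neg, Real.rpow_add ha]
            congr 1; ring
  have e2 : ∫⁻ τ in Set.Ioi a, ENNReal.ofReal (τ ^ (σ - 1)) * ENNReal.ofReal ((τ + a) ^ (-b))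
      ≤ ENNReal.ofReal (1 / (b - σ) * a ^ (σ - b)) := by
    calc _ ≤ ∫⁻ τ in Set.Ioi a, ENNReal.ofReal (τ ^ (σ - 1 - b)) := by
            refine setLIntegral_mono' measurableSet_Ioi fun τ hτ => ?_
            have hτ' : 0 < τ := ha.trans hτ
            rw [← ENNReal.ofReal_mul (by positivity), sub_eq_add_neg (σ - 1), Real.rpow_add hτ']
            refine ENNReal.ofReal_le_ofReal (mul_le_mul_of_nonneg_left ?_ (by positivity))
            exact Real.rpow_le_rpow_of_nonpos hτ' (by linarith) (by linarith)
      _ = _ := by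
            rw [lintegral_Ioi_ofReal_rpow (by linarith) ha]
            congr 1
            rw [show σ - 1 - b + 1 = -(b - σ) by ring, neg_div_neg_eq, neg_sub]
            ring
  refine (add_le_add e1 e2).trans ?_
  rw [← ENNReal.ofReal_add (by positivity)
    (mul_nonneg (one_div_nonneg.2 (by linarith)) (by positivity)), add_mul]

/-- Young's inequality `L¹ * L^q ⊆ L^q`, in majorant form. -/
theorem eLpNorm_le_of_enorm_le_lintegral_mul {q : ℝ} (hq : 1 < q) {A : ℂ → ℝ≥0∞}
    (hA : Measurable A) {u v : ℂ → ℂ} (hu : Measurable u)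
    (hv : ∀ x, ‖v x‖ₑ ≤ ∫⁻ y, A y * ‖u (x - y)‖ₑ) :
    eLpNorm v (ENNReal.ofReal q) volume
      ≤ (∫⁻ y, A y) * eLpNorm u (ENNReal.ofReal q) volume := by
  have hq0 : 0 < q := by linarith
  have hqr : (ENNReal.ofReal q).toReal = q := ENNReal.toReal_ofReal hq0.le
  have hc : (q.conjExponent).HolderConjugate q :=
    (Real.HolderConjugate.conjExponent hq).symm
  have h1q : 1 / q.conjExponent + 1 / q = 1 := by simpa using hc.inv_add_inv_eq_one
  rw [eLpNorm_eq_lintegral_rpow_enorm_toReal (by simpa using hq0) ENNReal.ofReal_ne_top,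
    eLpNorm_eq_lintegral_rpow_enorm_toReal (by simpa using hq0) ENNReal.ofReal_ne_top, hqr]
  have hpt : ∀ x, ‖v x‖ₑ ^ q ≤ (∫⁻ y, A y) ^ (q - 1) * ∫⁻ y, A y * ‖u (x - y)‖ₑ ^ q := by
    intro x
    have hH := ENNReal.lintegral_mul_le_Lp_mul_Lq volume hc
      (f := fun y => A y ^ (1 / q.conjExponent)) (g := fun y => A y ^ (1 / q) * ‖u (x - y)‖ₑ)
      (by fun_prop) (by fun_prop)
    have e1 : ∀ y, (A y ^ (1 / q.conjExponent)) * (A y ^ (1 / q) * ‖u (x - y)‖ₑ)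
        = A y * ‖u (x - y)‖ₑ := by
      intro y
      rw [← mul_assoc, ← ENNReal.rpow_add_of_nonneg _ _ (one_div_nonneg.2 hc.nonneg)
        (one_div_nonneg.2 hq0.le), h1q, ENNReal.rpow_one]
    have e2 : ∀ y, (A y ^ (1 / q.conjExponent)) ^ q.conjExponent = A y := by
      intro y
      rw [← ENNReal.rpow_mul, one_div_mul_cancel hc.ne_zero, ENNReal.rpow_one]
    have e3 : ∀ y, (A y ^ (1 / q) * ‖u (x - y)‖ₑ) ^ q = A y * ‖u (x - y)‖ₑ ^ q := by
      intro y
      rw [ENNReal.mul_rpow_of_nonneg _ _ hq0.le, ← ENNReal.rpow_mul,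
        one_div_mul_cancel hq0.ne', ENNReal.rpow_one]
    simp only [Pi.mul_apply, e1, e2, e3] at hH
    calc ‖v x‖ₑ ^ q ≤ _ := ENNReal.rpow_le_rpow ((hv x).trans hH) hq0.le
      _ = _ := by
        rw [ENNReal.mul_rpow_of_nonneg _ _ hq0.le, ← ENNReal.rpow_mul, ← ENNReal.rpow_mul,
          one_div_mul_cancel hq0.ne', ENNReal.rpow_one]
        congr 2
        have : 1 / q.conjExponent = 1 - 1 / q := by linarith
        rw [this]; field_simp
  have hswap : ∫⁻ x, ∫⁻ y, A y * ‖u (x - y)‖ₑ ^ q = (∫⁻ y, A y) * ∫⁻ x, ‖u x‖ₑ ^ q := by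
    rw [lintegral_lintegral_swap (by fun_prop), ← lintegral_mul_const _ hA]
    refine lintegral_congr fun y => ?_
    rw [lintegral_const_mul _ (by fun_prop),
      lintegral_sub_right_eq_self (fun x => ‖u x‖ₑ ^ q) y]
  calc (∫⁻ x, ‖v x‖ₑ ^ q) ^ (1 / q)
      ≤ ((∫⁻ y, A y) ^ q * ∫⁻ x, ‖u x‖ₑ ^ q) ^ (1 / q) := by
        refine ENNReal.rpow_le_rpow ?_ (by positivity)
        refine (lintegral_mono hpt).trans ?_
        rw [lintegral_const_mul _ (by fun_prop), hswap, ← mul_assoc]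
        refine mul_le_mul' (le_of_eq ?_) le_rfl
        conv_lhs => rw [← ENNReal.rpow_one (∫⁻ y, A y)]
        rw [← ENNReal.rpow_mul, ← ENNReal.rpow_add_of_nonneg _ _ (by linarith) zero_le_one]
        congr 1; ring
    _ = _ := by
        rw [ENNReal.mul_rpow_of_nonneg _ _ (by positivity), ← ENNReal.rpow_mul,
          mul_one_div_cancel hq0.ne', ENNReal.rpow_one]

/-- Distributional estimate behind the Hardy–Littlewood–Sobolev inequality. -/
theorem volume_lt_norm_le_of_riesz {p : ℝ} (hp : 2 < p) :
    ∃ c₂ c₃ : ℝ, 0 < c₂ ∧ 0 < c₃ ∧ ∀ u v : ℂ → ℂ, Measurable u →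
      ∫⁻ w, ‖u w‖ₑ ^ (2 * p / (p + 2)) ≤ 1 →
      (∀ z, ‖v z‖ₑ ≤ ∫⁻ w, ‖u w‖ₑ * ‖z - w‖ₑ⁻¹) → ∀ t : ℝ, 0 < t →
      volume {z | t < ‖v z‖} ≤ ENNReal.ofReal (c₂ * t ^ (-p / 2 - 1)) *
        ∫⁻ w, if c₃ * t ^ (1 + p / 2) < ‖u w‖ then ‖u w‖ₑ else 0 := by
  have hp2 : 0 < p - 2 := by linarith
  set q : ℝ := 2 * p / (p + 2) with hq
  set q' : ℝ := 2 * p / (p - 2) with hq'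
  have hq'2 : 2 < q' := by rw [hq', lt_div_iff₀ hp2]; linarith
  have hconj : q.HolderConjugate q' := by
    rw [Real.holderConjugate_iff]
    constructor
    · rw [hq, lt_div_iff₀ (by linarith)]; linarith
    · rw [hq, hq']; field_simp; ring
  set c₁ : ℝ := (2 * Real.pi / (q' - 2)) ^ (1 / q') with hc₁
  have hc₁0 : 0 < c₁ := Real.rpow_pos_of_pos (div_pos (by positivity) (by linarith)) _
  refine ⟨4 * Real.pi * (4 * c₁) ^ (p / 2), 1 / (8 * Real.pi * (4 * c₁) ^ (p / 2)),
    by positivity, by positivity, ?_⟩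
  intro u v hu hnorm hv t ht
  set R : ℝ := (4 * c₁ / t) ^ (p / 2) with hR
  have hR0 : 0 < R := by positivity
  have hRt : R = (4 * c₁) ^ (p / 2) * t ^ (-p / 2) := by
    rw [hR, Real.div_rpow (by positivity) ht.le, neg_div, Real.rpow_neg ht.le]; rfl
  have ea : 1 / (8 * Real.pi * (4 * c₁) ^ (p / 2)) * t ^ (1 + p / 2) = t / (8 * Real.pi * R) := by
    rw [hRt, Real.rpow_add ht, neg_div, Real.rpow_neg ht.le, Real.rpow_one]
    field_simp
  set a : ℝ := t / (8 * Real.pi * R) with ha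
  have ha0 : 0 < a := by positivity
  rw [ea]
  set near : ℂ → ℝ≥0∞ := fun w => if ‖w‖ ≤ R then ‖w‖ₑ⁻¹ else 0 with hnear
  set far : ℂ → ℝ≥0∞ := fun w => if ‖w‖ ≤ R then 0 else ‖w‖ₑ⁻¹ with hfar
  set f₁ : ℂ → ℝ≥0∞ := fun w => if a < ‖u w‖ then ‖u w‖ₑ else 0 with hf₁
  have hms : MeasurableSet {w : ℂ | ‖w‖ ≤ R} := measurableSet_le measurable_norm measurable_const
  have mnear : Measurable near := Measurable.ite hms (by fun_prop) (by fun_prop)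
  have mfar : Measurable far := Measurable.ite hms (by fun_prop) (by fun_prop)
  have mf₁ : Measurable f₁ :=
    Measurable.ite (measurableSet_lt measurable_const hu.norm) (by fun_prop) (by fun_prop)
  have hfarint : ∀ z, ∫⁻ w, ‖u w‖ₑ * far (z - w) ≤ ENNReal.ofReal (t / 4) := by
    intro z
    have hH := ENNReal.lintegral_mul_le_Lp_mul_Lq volume hconj
      (f := fun w => ‖u w‖ₑ) (g := fun w => far (z - w)) (by fun_prop) (by fun_prop)
    simp only [Pi.mul_apply] at hH
    refine hH.trans ?_
    rw [lintegral_sub_left_eq_self (fun w => far w ^ q') z, lintegral_inv_enorm_far hR0 hq'2]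
    calc _ ≤ 1 * ENNReal.ofReal (2 * Real.pi * (R ^ (2 - q') / (q' - 2))) ^ (1 / q') :=
          mul_le_mul' (ENNReal.rpow_le_one hnorm (one_div_nonneg.2 hconj.nonneg)) le_rfl
      _ = ENNReal.ofReal (t / 4) := by
          have h2 : 0 < q' - 2 := by linarith
          rw [one_mul, ENNReal.ofReal_rpow_of_pos (by positivity)]
          congr 1
          rw [show 2 * Real.pi * (R ^ (2 - q') / (q' - 2))
              = 2 * Real.pi / (q' - 2) * R ^ (2 - q') by ring,
            Real.mul_rpow (by positivity) (by positivity), ← hc₁, ← Real.rpow_mul hR0.le,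
            hR, ← Real.rpow_mul (by positivity),
            show p / 2 * ((2 - q') * (1 / q')) = -1 by rw [hq']; field_simp; ring,
            Real.rpow_neg_one]
          field_simp
  have hmid : ∀ z, ∫⁻ w, ENNReal.ofReal a * near (z - w) = ENNReal.ofReal (t / 4) := by
    intro z
    rw [lintegral_const_mul _ (by fun_prop), lintegral_sub_left_eq_self near z,
      lintegral_inv_enorm_near, ← ENNReal.ofReal_mul ha0.le]
    congr 1
    rw [ha]; field_simp; ring
  have hsub : {z | t < ‖v z‖} ⊆ {z | ENNReal.ofReal (t / 2) ≤ ∫⁻ w, f₁ w * near (z - w)} := by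
    intro z hz
    have h1 : ENNReal.ofReal t ≤ ENNReal.ofReal (t / 2) + ∫⁻ w, f₁ w * near (z - w) := by
      calc ENNReal.ofReal t ≤ ‖v z‖ₑ := by
            rw [← ofReal_norm]; exact ENNReal.ofReal_le_ofReal (le_of_lt hz)
        _ ≤ ∫⁻ w, ‖u w‖ₑ * ‖z - w‖ₑ⁻¹ := hv z
        _ ≤ ∫⁻ w, ((‖u w‖ₑ * far (z - w) + ENNReal.ofReal a * near (z - w))
              + f₁ w * near (z - w)) := by
            refine lintegral_mono fun w => ?_
            by_cases h : ‖z - w‖ ≤ R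
            · simp only [hfar, hnear, if_pos h, mul_zero, zero_add]
              rw [← add_mul]
              refine mul_le_mul' ?_ le_rfl
              by_cases h' : a < ‖u w‖
              · simp [hf₁, if_pos h']
              · simp only [hf₁, if_neg h', add_zero]
                rw [← ofReal_norm]; exact ENNReal.ofReal_le_ofReal (not_lt.1 h')
            · simp [hfar, hnear, if_neg h]
        _ = _ := by
            rw [lintegral_add_left (by fun_prop), lintegral_add_left (by fun_prop)]
        _ ≤ _ := by
            rw [hmid z]
            refine add_le_add ((add_le_add (hfarint z) le_rfl).trans (le_of_eq ?_)) le_rfl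
            rw [← ENNReal.ofReal_add (by positivity) (by positivity)]; congr 1; ring
    rw [show t = t / 2 + t / 2 by ring, ENNReal.ofReal_add (by positivity) (by positivity),
      show (t / 2 + t / 2) / 2 = t / 2 by ring] at h1
    exact (ENNReal.add_le_add_iff_left ENNReal.ofReal_ne_top).1 h1
  refine (measure_mono hsub).trans ?_
  refine (meas_ge_le_lintegral_div (Measurable.lintegral_prod_right (by fun_prop)).aemeasurable
    (by simpa using ht) ENNReal.ofReal_ne_top).trans ?_
  have hswap : ∫⁻ z, ∫⁻ w, f₁ w * near (z - w)
      = ENNReal.ofReal (2 * Real.pi * R) * ∫⁻ w, f₁ w := by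
    rw [lintegral_lintegral_swap (by fun_prop), mul_comm, ← lintegral_mul_const _ mf₁]
    refine lintegral_congr fun w => ?_
    rw [lintegral_const_mul _ (by fun_prop), lintegral_sub_right_eq_self near w,
      lintegral_inv_enorm_near]
  rw [hswap, ENNReal.div_eq_inv_mul, ← mul_assoc, ← ENNReal.ofReal_inv_of_pos (by positivity),
    ← ENNReal.ofReal_mul (by positivity)]
  refine mul_le_mul' (le_of_eq ?_) le_rfl
  congr 1
  rw [hRt, Real.rpow_sub ht, Real.rpow_one]
  field_simp; ring

theorem lintegral_rpow_le_of_riesz {p : ℝ} (hp : 2 < p) :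
    ∃ C : ℝ, 0 < C ∧ ∀ u v : ℂ → ℂ, Measurable u → AEStronglyMeasurable v volume →
      ∫⁻ w, ‖u w‖ₑ ^ (2 * p / (p + 2)) ≤ 1 →
      (∀ z, ‖v z‖ₑ ≤ ∫⁻ w, ‖u w‖ₑ * ‖z - w‖ₑ⁻¹) → ∫⁻ z, ‖v z‖ₑ ^ p ≤ ENNReal.ofReal C := by
  obtain ⟨c₂, c₃, hc₂, hc₃, H⟩ := volume_lt_norm_le_of_riesz hp
  have hp2 : 0 < p - 2 := by linarith
  have hp0 : 0 < p := by linarith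
  set γ : ℝ := 1 + p / 2 with hγ
  have hγ0 : 0 < γ := by positivity
  set e : ℝ := (p - 2) / (p + 2) with he
  have he0 : 0 < e := div_pos hp2 (by linarith)
  have he2 : 0 < p / 2 - 1 := by linarith
  refine ⟨p * (c₂ * (1 / (c₃ ^ e * (p / 2 - 1)))), by positivity, ?_⟩
  intro u v hu hv hnorm hle
  have h0 : ∀ z, ‖v z‖ₑ ^ p = ENNReal.ofReal (‖v z‖ ^ p) := by
    intro z
    rw [← ofReal_norm, ENNReal.ofReal_rpow_of_nonneg (norm_nonneg _) hp0.le]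
  rw [lintegral_congr h0, lintegral_rpow_eq_lintegral_meas_lt_mul volume
    (Eventually.of_forall fun z => norm_nonneg _) hv.norm.aemeasurable hp0,
    ENNReal.ofReal_mul hp0.le]
  refine mul_le_mul' le_rfl ?_
  have hmeas : Measurable fun x : ℝ × ℂ => if c₃ * x.1 ^ γ < ‖u x.2‖ then ‖u x.2‖ₑ else 0 :=
    Measurable.ite (measurableSet_lt (by fun_prop) (by fun_prop)) (by fun_prop) (by fun_prop)
  have hinner : ∀ w, ∫⁻ t in Set.Ioi (0 : ℝ), ENNReal.ofReal (t ^ (p / 2 - 2)) *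
      (if c₃ * t ^ γ < ‖u w‖ then ‖u w‖ₑ else 0)
      ≤ ENNReal.ofReal (1 / (c₃ ^ e * (p / 2 - 1))) * ‖u w‖ₑ ^ (2 * p / (p + 2)) := by
    intro w
    set T : ℝ := (‖u w‖ / c₃) ^ (1 / γ) with hT
    have hT0 : 0 ≤ T := by positivity
    calc _ ≤ ∫⁻ t in Set.Ioi (0 : ℝ), (Set.Ioc 0 T).indicator
            (fun t => ENNReal.ofReal (t ^ (p / 2 - 2)) * ‖u w‖ₑ) t := by
          refine setLIntegral_mono' measurableSet_Ioi fun t ht => ?_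
          have ht' : 0 < t := ht
          by_cases h : c₃ * t ^ γ < ‖u w‖
          · have htT : t ≤ T := by
              rw [hT, one_div, Real.le_rpow_inv_iff_of_pos ht'.le (by positivity) hγ0,
                le_div_iff₀ hc₃, mul_comm]
              exact h.le
            rw [if_pos h, Set.indicator_of_mem (Set.mem_Ioc.2 ⟨ht', htT⟩)]
          · rw [if_neg h, mul_zero]; exact zero_le
      _ = ENNReal.ofReal (T ^ (p / 2 - 1) / (p / 2 - 1)) * ‖u w‖ₑ := by
          rw [lintegral_indicator measurableSet_Ioc, Measure.restrict_restrict measurableSet_Ioc,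
            Set.inter_eq_left.2 Set.Ioc_subset_Ioi_self, lintegral_mul_const _ (by fun_prop),
            lintegral_Ioc_ofReal_rpow (by linarith) hT0]
          rw [show p / 2 - 2 + 1 = p / 2 - 1 by ring]
      _ = _ := by
          have hTe : T ^ (p / 2 - 1) = ‖u w‖ ^ e / c₃ ^ e := by
            rw [hT, ← Real.rpow_mul (by positivity), ← Real.div_rpow (norm_nonneg _) hc₃.le]
            congr 1
            rw [he, hγ]; field_simp; ring
          have hexp : 2 * p / (p + 2) = e + 1 := by rw [he]; field_simp; ring
          have hue : ‖u w‖ₑ ^ e = ENNReal.ofReal (‖u w‖ ^ e) := by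
            rw [← ofReal_norm, ENNReal.ofReal_rpow_of_nonneg (norm_nonneg _) he0.le]
          rw [hexp, ENNReal.rpow_add_of_nonneg _ _ he0.le zero_le_one, ENNReal.rpow_one,
            ← mul_assoc, hue, ← ENNReal.ofReal_mul (by positivity), hTe]
          congr 2
          field_simp
  calc ∫⁻ t in Set.Ioi (0 : ℝ), volume {a | t < ‖v a‖} * ENNReal.ofReal (t ^ (p - 1))
      ≤ ∫⁻ t in Set.Ioi (0 : ℝ), ENNReal.ofReal c₂ * ∫⁻ w, ENNReal.ofReal (t ^ (p / 2 - 2)) *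
          (if c₃ * t ^ γ < ‖u w‖ then ‖u w‖ₑ else 0) := by
        refine setLIntegral_mono' measurableSet_Ioi fun t ht => ?_
        have ht' : 0 < t := ht
        refine (mul_le_mul' (H u v hu hnorm hle t ht') le_rfl).trans (le_of_eq ?_)
        have hmt : Measurable fun w : ℂ => if c₃ * t ^ γ < ‖u w‖ then ‖u w‖ₑ else 0 :=
          hmeas.comp (measurable_const.prodMk measurable_id)
        rw [lintegral_const_mul _ hmt, ← mul_assoc, mul_right_comm, ← ENNReal.ofReal_mul (by positivity),
          ← ENNReal.ofReal_mul hc₂.le, mul_assoc c₂, ← Real.rpow_add ht']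
        congr 4; ring
    _ = ENNReal.ofReal c₂ * ∫⁻ w, ∫⁻ t in Set.Ioi (0 : ℝ), ENNReal.ofReal (t ^ (p / 2 - 2)) *
          (if c₃ * t ^ γ < ‖u w‖ then ‖u w‖ₑ else 0) := by
        have hm2 : Measurable (Function.uncurry fun (t : ℝ) (w : ℂ) =>
            ENNReal.ofReal (t ^ (p / 2 - 2)) *
              (if c₃ * t ^ γ < ‖u w‖ then ‖u w‖ₑ else 0)) := by
          refine Measurable.mul (by fun_prop) hmeas
        rw [lintegral_const_mul _ hm2.lintegral_prod_right, lintegral_lintegral_swap hm2.aemeasurable]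
    _ ≤ ENNReal.ofReal c₂ * ∫⁻ w, ENNReal.ofReal (1 / (c₃ ^ e * (p / 2 - 1))) *
          ‖u w‖ₑ ^ (2 * p / (p + 2)) := mul_le_mul' le_rfl (lintegral_mono hinner)
    _ ≤ _ := by
        rw [lintegral_const_mul _ (by fun_prop), ENNReal.ofReal_mul hc₂.le]
        refine mul_le_mul' le_rfl ((mul_le_mul' le_rfl hnorm).trans (by rw [mul_one]))

/-- The Hardy–Littlewood–Sobolev inequality of order one in the plane, in majorant form. -/
theorem eLpNorm_le_of_enorm_le_riesz {p : ℝ} (hp : 2 < p) :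
    ∃ C : ℝ, 0 < C ∧ ∀ u v : ℂ → ℂ, Measurable u → AEStronglyMeasurable v volume →
      (∀ z, ‖v z‖ₑ ≤ ∫⁻ w, ‖u w‖ₑ * ‖z - w‖ₑ⁻¹) →
      eLpNorm v (ENNReal.ofReal p) volume
        ≤ ENNReal.ofReal C * eLpNorm u (ENNReal.ofReal (2 * p / (p + 2))) volume := by
  obtain ⟨C, hC, H⟩ := lintegral_rpow_le_of_riesz hp
  have hp0 : 0 < p := by linarith
  set q : ℝ := 2 * p / (p + 2) with hq
  have hq0 : 0 < q := by positivity
  refine ⟨C ^ (1 / p), by positivity, ?_⟩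
  intro u v hu hv hle
  have hpr : (ENNReal.ofReal p).toReal = p := ENNReal.toReal_ofReal hp0.le
  have hqr : (ENNReal.ofReal q).toReal = q := ENNReal.toReal_ofReal hq0.le
  have hqn : ENNReal.ofReal q ≠ 0 := by simpa using hq0
  rcases eq_or_ne (eLpNorm u (ENNReal.ofReal q) volume) ⊤ with htop | htop
  · rw [htop, ENNReal.mul_top (by simpa using by positivity)]; exact le_top
  rcases eq_or_ne (eLpNorm u (ENNReal.ofReal q) volume) 0 with h0 | h0
  · rw [eLpNorm_eq_zero_iff hu.aestronglyMeasurable hqn] at h0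
    have hv0 : v = 0 := by
      ext z
      have h1 : ∫⁻ w, ‖u w‖ₑ * ‖z - w‖ₑ⁻¹ = 0 := by
        rw [lintegral_congr_ae (g := fun _ => 0)]
        · simp
        · filter_upwards [h0] with w hw
          simp [hw]
      have := hle z
      rw [h1] at this
      simpa using this
    rw [hv0]; simp
  set N : ℝ := (eLpNorm u (ENNReal.ofReal q) volume).toReal with hN
  have hN0 : 0 < N := ENNReal.toReal_pos h0 htop
  have hNe : ENNReal.ofReal N = eLpNorm u (ENNReal.ofReal q) volume := ENNReal.ofReal_toReal htop
  have hNinv : ‖((N⁻¹ : ℝ) : ℂ)‖ₑ = (eLpNorm u (ENNReal.ofReal q) volume)⁻¹ := by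
    rw [← ofReal_norm, Complex.norm_real, Real.norm_of_nonneg (by positivity),
      ENNReal.ofReal_inv_of_pos hN0, hNe]
  have key := H (((N⁻¹ : ℝ) : ℂ) • u) (((N⁻¹ : ℝ) : ℂ) • v) (hu.const_smul _) (hv.const_smul _) ?_ ?_
  · have h2 : eLpNorm (((N⁻¹ : ℝ) : ℂ) • v) (ENNReal.ofReal p) volume
        ≤ ENNReal.ofReal (C ^ (1 / p)) := by
      rw [eLpNorm_eq_lintegral_rpow_enorm_toReal (by simpa using hp0) ENNReal.ofReal_ne_top, hpr,
        ← ENNReal.ofReal_rpow_of_pos hC]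
      exact ENNReal.rpow_le_rpow key (by positivity)
    rw [eLpNorm_const_smul, hNinv, ← ENNReal.div_eq_inv_mul] at h2
    exact (ENNReal.div_le_iff h0 htop).1 h2
  · have h3 : eLpNorm (((N⁻¹ : ℝ) : ℂ) • u) (ENNReal.ofReal q) volume = 1 := by
      rw [eLpNorm_const_smul, hNinv, ENNReal.inv_mul_cancel h0 htop]
    rw [eLpNorm_eq_lintegral_rpow_enorm_toReal hqn ENNReal.ofReal_ne_top, hqr] at h3
    have h4 := congrArg (· ^ q) h3
    simp only [ENNReal.one_rpow, ← ENNReal.rpow_mul] at h4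
    rw [one_div_mul_cancel hq0.ne', ENNReal.rpow_one] at h4
    exact h4.le
  · intro z
    simp only [Pi.smul_apply, enorm_smul]
    calc _ ≤ ‖((N⁻¹ : ℝ) : ℂ)‖ₑ * ∫⁻ w, ‖u w‖ₑ * ‖z - w‖ₑ⁻¹ := mul_le_mul' le_rfl (hle z)
      _ = _ := by
        rw [← lintegral_const_mul _ (by fun_prop)]
        simp_rw [mul_assoc]

/-- A function which is both integrable and bounded. -/
def BddIntegrable (u : ℂ → ℂ) : Prop :=
  Integrable u ∧ ∃ M : ℝ, ∀ z, ‖u z‖ ≤ M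

theorem BddIntegrable.mul_bdd {u f : ℂ → ℂ} (hu : BddIntegrable u) (hf : Continuous f) {M : ℝ}
    (hM : ∀ z, ‖f z‖ ≤ M) : BddIntegrable fun z => f z * u z := by
  obtain ⟨hi, N, hN⟩ := hu
  refine ⟨hi.bdd_mul hf.aestronglyMeasurable (ae_of_all _ hM), M * N, fun z => ?_⟩
  rw [norm_mul]
  exact mul_le_mul (hM z) (hN z) (norm_nonneg _) ((norm_nonneg _).trans (hM z))

theorem BddIntegrable.add {u v : ℂ → ℂ} (hu : BddIntegrable u) (hv : BddIntegrable v) :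
    BddIntegrable fun z => u z + v z := by
  obtain ⟨hi, M, hM⟩ := hu
  obtain ⟨hi', N, hN⟩ := hv
  exact ⟨hi.add hi', M + N, fun z => (norm_add_le _ _).trans (add_le_add (hM z) (hN z))⟩

theorem BddIntegrable.const_mul {u : ℂ → ℂ} (hu : BddIntegrable u) (c : ℂ) :
    BddIntegrable fun z => c * u z :=
  hu.mul_bdd continuous_const fun _ => le_rfl

theorem BddIntegrable.div_sub {u : ℂ → ℂ} (hu : BddIntegrable u) (z : ℂ) :
    Integrable fun w => u w / (z - w) := by
  obtain ⟨hi, M, hM⟩ := hu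
  have hM0 : 0 ≤ M := (norm_nonneg _).trans (hM 0)
  have hmeas : AEStronglyMeasurable (fun w => u w / (z - w)) volume := by
    simp_rw [div_eq_mul_inv]
    exact hi.1.mul (by fun_prop : Measurable fun w : ℂ => (z - w)⁻¹).aestronglyMeasurable
  refine ⟨hmeas, ?_⟩
  have hbound : ∀ w, ‖u w / (z - w)‖ₑ ≤
      ENNReal.ofReal M * (fun y : ℂ => if ‖y‖ ≤ 1 then ‖y‖ₑ⁻¹ else 0) (z - w) + ‖u w‖ₑ := by
    intro w
    rcases eq_or_ne (z - w) 0 with h0 | h0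
    · simp [h0]
    have he : ‖u w / (z - w)‖ₑ = ‖u w‖ₑ * ‖z - w‖ₑ⁻¹ := by
      rw [div_eq_mul_inv, enorm_mul, enorm_inv h0]
    rw [he]
    by_cases h : ‖z - w‖ ≤ 1
    · refine le_add_right ?_
      simp only [h, if_true]
      refine mul_le_mul' ?_ le_rfl
      rw [← ofReal_norm]; exact ENNReal.ofReal_le_ofReal (hM w)
    · refine le_add_left ?_
      refine (mul_le_mul' le_rfl (ENNReal.inv_le_one.2 ?_)).trans (mul_one _).le
      rw [← ofReal_norm]
      exact ENNReal.one_le_ofReal.2 (not_le.1 h).le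
  refine (lintegral_mono hbound).trans_lt ?_
  have hm : Measurable fun y : ℂ => if ‖y‖ ≤ 1 then ‖y‖ₑ⁻¹ else 0 :=
    Measurable.ite (measurableSet_le measurable_norm measurable_const) (by fun_prop) (by fun_prop)
  have hm' : Measurable fun w : ℂ => (fun y : ℂ => if ‖y‖ ≤ 1 then ‖y‖ₑ⁻¹ else 0) (z - w) :=
    hm.comp (by fun_prop)
  rw [lintegral_add_left (hm'.const_mul _), lintegral_const_mul _ hm',
    lintegral_sub_left_eq_self (fun y : ℂ => if ‖y‖ ≤ 1 then ‖y‖ₑ⁻¹ else 0) z,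
    lintegral_inv_enorm_near 1]
  exact ENNReal.add_lt_top.2 ⟨ENNReal.mul_lt_top ENNReal.ofReal_lt_top ENNReal.ofReal_lt_top, hi.2⟩

/-- A smooth regularisation of `1 / z`. -/
noncomputable def cauchyReg (ε : ℝ) (z : ℂ) : ℂ := conj z / (z * conj z + ε)

theorem norm_mul_conj_add {ε : ℝ} (hε : 0 < ε) (z : ℂ) : ‖z * conj z + ε‖ = ‖z‖ ^ 2 + ε := by
  have : z * conj z + (ε : ℂ) = ((‖z‖ ^ 2 + ε : ℝ) : ℂ) := by
    rw [Complex.mul_conj, Complex.normSq_eq_norm_sq]; push_cast; ring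
  rw [this, Complex.norm_real, Real.norm_of_nonneg (by positivity)]

theorem mul_conj_add_ne_zero {ε : ℝ} (hε : 0 < ε) (z : ℂ) : z * conj z + ε ≠ 0 := by
  rw [← norm_ne_zero_iff, norm_mul_conj_add hε]; positivity

theorem continuous_cauchyReg {ε : ℝ} (hε : 0 < ε) : Continuous (cauchyReg ε) :=
  Complex.continuous_conj.div₀ (by fun_prop) (mul_conj_add_ne_zero hε)

theorem norm_cauchyReg {ε : ℝ} (hε : 0 < ε) (z : ℂ) :
    ‖cauchyReg ε z‖ = ‖z‖ / (‖z‖ ^ 2 + ε) := by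
  rw [cauchyReg, norm_div, norm_mul_conj_add hε, RCLike.norm_conj]

theorem norm_cauchyReg_le {ε : ℝ} (hε : 0 < ε) (z : ℂ) : ‖cauchyReg ε z‖ ≤ 1 + 1 / ε := by
  rw [norm_cauchyReg hε, div_le_iff₀ (by positivity)]
  have : (1 + 1 / ε) * (‖z‖ ^ 2 + ε) = ‖z‖ ^ 2 + 1 + (ε + ‖z‖ ^ 2 / ε) := by field_simp; ring
  rw [this]
  have : 0 ≤ ε + ‖z‖ ^ 2 / ε := by positivity
  nlinarith [norm_nonneg z, sq_nonneg (‖z‖ - 1)]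

theorem norm_cauchyReg_le_inv {ε : ℝ} (hε : 0 < ε) {z : ℂ} (hz : z ≠ 0) :
    ‖cauchyReg ε z‖ ≤ ‖z‖⁻¹ := by
  have : 0 < ‖z‖ := norm_pos_iff.2 hz
  rw [norm_cauchyReg hε, div_le_iff₀ (by positivity), mul_add]
  have h1 : ‖z‖⁻¹ * ‖z‖ ^ 2 = ‖z‖ := by field_simp
  rw [h1]
  have : 0 ≤ ‖z‖⁻¹ * ε := by positivity
  linarith

theorem hasFDerivAt_cauchyReg {ε : ℝ} (hε : 0 < ε) (z : ℂ) :
    HasFDerivAt (cauchyReg ε)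
      ((z * conj z + (ε : ℂ))⁻¹ • (conjCLE : ℂ →L[ℝ] ℂ) -
        (conj z / (z * conj z + (ε : ℂ)) ^ 2) •
          (z • (conjCLE : ℂ →L[ℝ] ℂ) + conj z • ContinuousLinearMap.id ℝ ℂ)) z := by
  have hc : HasFDerivAt (fun z : ℂ => conj z) (conjCLE : ℂ →L[ℝ] ℂ) z := conjCLE.hasFDerivAt
  have hD : HasFDerivAt (fun z : ℂ => z * conj z + (ε : ℂ))
      (z • (conjCLE : ℂ →L[ℝ] ℂ) + conj z • ContinuousLinearMap.id ℝ ℂ) z :=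
    ((hasFDerivAt_id z).mul hc).add_const _
  have h0 := mul_conj_add_ne_zero hε z
  have := hc.mul ((hasDerivAt_inv h0).comp_hasFDerivAt z hD)
  refine HasFDerivAt.congr_fderiv (f := cauchyReg ε) this ?_
  ext1 v
  simp
  ring

theorem norm_fderiv_cauchyReg_le {ε : ℝ} (hε : 0 < ε) (z v : ℂ) :
    ‖fderiv ℝ (cauchyReg ε) z v‖ ≤ 3 / ε * ‖v‖ := by
  rw [(hasFDerivAt_cauchyReg hε z).fderiv]
  have hD := norm_mul_conj_add hε z
  have hle : ‖z‖ ^ 2 ≤ ‖z‖ ^ 2 + ε := by linarith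
  have hle' : ε ≤ ‖z‖ ^ 2 + ε := by nlinarith [sq_nonneg ‖z‖]
  have hp : 0 < ‖z‖ ^ 2 + ε := by positivity
  simp only [_root_.sub_apply, _root_.smul_apply,
    _root_.add_apply, ContinuousLinearEquiv.coe_coe, conjCLE_apply,
    ContinuousLinearMap.id_apply, smul_eq_mul]
  have h1 : ‖(z * conj z + (ε : ℂ))⁻¹ * conj v‖ ≤ 1 / ε * ‖v‖ := by
    rw [norm_mul, norm_inv, hD, RCLike.norm_conj, one_div]
    gcongr
  have h2 : ‖conj z / (z * conj z + (ε : ℂ)) ^ 2 * (z * conj v + conj z * v)‖ ≤ 2 / ε * ‖v‖ := by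
    rw [norm_mul, norm_div, norm_pow, hD, RCLike.norm_conj]
    have h3 : ‖z * conj v + conj z * v‖ ≤ 2 * ‖z‖ * ‖v‖ := by
      refine (norm_add_le _ _).trans (le_of_eq ?_)
      rw [norm_mul, norm_mul, RCLike.norm_conj, RCLike.norm_conj]; ring
    calc ‖z‖ / (‖z‖ ^ 2 + ε) ^ 2 * ‖z * conj v + conj z * v‖
        ≤ ‖z‖ / (‖z‖ ^ 2 + ε) ^ 2 * (2 * ‖z‖ * ‖v‖) := by gcongr
      _ = (‖z‖ ^ 2 / (‖z‖ ^ 2 + ε)) * (2 / (‖z‖ ^ 2 + ε)) * ‖v‖ := by field_simp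
      _ ≤ 1 * (2 / ε) * ‖v‖ := by
        gcongr
        exact (div_le_one hp).2 hle
      _ = _ := by ring
  refine (norm_sub_le _ _).trans ((add_le_add h1 h2).trans (le_of_eq ?_))
  ring

theorem continuous_fderiv_cauchyReg {ε : ℝ} (hε : 0 < ε) (v : ℂ) :
    Continuous fun z => fderiv ℝ (cauchyReg ε) z v := by
  have : ∀ z, fderiv ℝ (cauchyReg ε) z v = (z * conj z + (ε : ℂ))⁻¹ * conj v -
      conj z / (z * conj z + (ε : ℂ)) ^ 2 * (z * conj v + conj z * v) := fun z => by
    rw [(hasFDerivAt_cauchyReg hε z).fderiv]; simp; ring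
  simp_rw [this]
  refine .sub (.mul (.inv₀ (by fun_prop) (mul_conj_add_ne_zero hε)) (by fun_prop)) (.mul
    (.div₀ (by fun_prop) (by fun_prop) fun z => pow_ne_zero 2 (mul_conj_add_ne_zero hε z))
    (by fun_prop))

theorem dbar_cauchyReg {ε : ℝ} (hε : 0 < ε) (z : ℂ) :
    dbar (cauchyReg ε) z = ε / (z * conj z + ε) ^ 2 := by
  rw [dbar, (hasFDerivAt_cauchyReg hε z).fderiv]
  have h0 := mul_conj_add_ne_zero hε z
  simp
  field_simp
  ring_nf
  simp
  ring

theorem integral_cauchyReg_mul_dbar {ε : ℝ} (hε : 0 < ε) {g : ℂ → ℂ} (hd : Differentiable ℝ g)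
    (hg : BddIntegrable g) (hg' : ∀ v, BddIntegrable fun z => fderiv ℝ g z v) (z : ℂ) :
    ∫ w, cauchyReg ε (z - w) * dbar g w = ∫ w, dbar (cauchyReg ε) (z - w) * g w := by
  have hfd : ∀ w, HasFDerivAt (fun w => cauchyReg ε (z - w)) (-(fderiv ℝ (cauchyReg ε) (z - w))) w := by
    intro w
    have h1 := (hasFDerivAt_cauchyReg hε (z - w)).differentiableAt.hasFDerivAt
    have h2 : HasFDerivAt (fun w : ℂ => z - w) (-ContinuousLinearMap.id ℝ ℂ) w :=
      (hasFDerivAt_id w).const_sub z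
    refine HasFDerivAt.congr_fderiv (h1.comp w h2) ?_
    ext1 v; simp
  have hI : ∀ v, Integrable fun w => cauchyReg ε (z - w) * fderiv ℝ g w v := fun v =>
    ((hg' v).mul_bdd ((continuous_cauchyReg hε).comp (by fun_prop : Continuous fun w => z - w))
      fun w => norm_cauchyReg_le hε _).1
  have hI' : ∀ v, Integrable fun w => fderiv ℝ (cauchyReg ε) (z - w) v * g w := fun v =>
    (hg.mul_bdd ((continuous_fderiv_cauchyReg hε v).comp (by fun_prop : Continuous fun w => z - w))
      fun w => norm_fderiv_cauchyReg_le hε _ _).1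
  have key : ∀ v, ∫ w, cauchyReg ε (z - w) * fderiv ℝ g w v
      = ∫ w, fderiv ℝ (cauchyReg ε) (z - w) v * g w := by
    intro v
    rw [integral_mul_fderiv_eq_neg_fderiv_mul_of_integrable, ← integral_neg]
    · refine integral_congr_ae (ae_of_all _ fun w => ?_)
      simp [(hfd w).fderiv]
    · refine (hI' v).neg.congr (ae_of_all _ fun w => ?_)
      simp [(hfd w).fderiv]
    · exact hI v
    · exact (hg.mul_bdd ((continuous_cauchyReg hε).comp
        (by fun_prop : Continuous fun w => z - w)) fun w => norm_cauchyReg_le hε _).1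
    · exact fun w _ => (hfd w).differentiableAt
    · exact fun w _ => hd w
  have e1 : ∀ w, cauchyReg ε (z - w) * dbar g w = (1 / 2 : ℂ) *
      (cauchyReg ε (z - w) * fderiv ℝ g w 1 + I * (cauchyReg ε (z - w) * fderiv ℝ g w I)) := by
    intro w; rw [dbar]; ring
  have e2 : ∀ w, dbar (cauchyReg ε) (z - w) * g w = (1 / 2 : ℂ) *
      (fderiv ℝ (cauchyReg ε) (z - w) 1 * g w + I * (fderiv ℝ (cauchyReg ε) (z - w) I * g w)) := by
    intro w; rw [dbar]; ring
  simp_rw [e1, e2]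
  rw [integral_const_mul, integral_const_mul, integral_add (hI 1) ((hI I).const_mul _),
    integral_add (hI' 1) ((hI' I).const_mul _), integral_const_mul, integral_const_mul, key, key]

theorem lintegral_inv_norm_sq_add_one_sq :
    ∫⁻ x : ℂ, ENNReal.ofReal (((‖x‖ ^ 2 + 1) ^ 2)⁻¹) = ENNReal.ofReal Real.pi := by
  rw [lintegral_radial (g := fun r => ENNReal.ofReal (((r ^ 2 + 1) ^ 2)⁻¹)) (by fun_prop)]
  have hd : ∀ r : ℝ, HasDerivAt (fun r : ℝ => -(2 * (r ^ 2 + 1))⁻¹) (r * ((r ^ 2 + 1) ^ 2)⁻¹) r := by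
    intro r
    have h0 : 2 * (r ^ 2 + 1) ≠ 0 := by positivity
    have := ((((hasDerivAt_pow 2 r).add_const 1).const_mul 2).inv h0).neg
    refine HasDerivAt.congr_deriv this ?_
    have : r ^ 2 + 1 ≠ 0 := by positivity
    field_simp
    norm_num
  have hlim : Tendsto (fun r : ℝ => -(2 * (r ^ 2 + 1))⁻¹) atTop (𝓝 0) := by
    rw [← neg_zero]
    refine Tendsto.neg (tendsto_inv_atTop_zero.comp ?_)
    refine Tendsto.const_mul_atTop two_pos (tendsto_atTop_add_const_right _ _ ?_)
    exact tendsto_pow_atTop two_ne_zero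
  have hnn : ∀ r ∈ Set.Ioi (0 : ℝ), 0 ≤ r * ((r ^ 2 + 1) ^ 2)⁻¹ := fun r hr => by
    have : 0 < r := hr
    positivity
  have hint := integrableOn_Ioi_deriv_of_nonneg' (fun r _ => hd r) hnn hlim
  have hval := integral_Ioi_of_hasDerivAt_of_nonneg' (fun r _ => hd r) hnn hlim
  have : ∫⁻ r in Set.Ioi (0 : ℝ), ENNReal.ofReal r * ENNReal.ofReal (((r ^ 2 + 1) ^ 2)⁻¹)
      = ENNReal.ofReal (1 / 2) := by
    rw [setLIntegral_congr_fun measurableSet_Ioi (g := fun r =>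
      ENNReal.ofReal (r * ((r ^ 2 + 1) ^ 2)⁻¹)) (fun r hr => by
        exact (ENNReal.ofReal_mul (le_of_lt hr)).symm),
      ← ofReal_integral_eq_lintegral_ofReal hint, hval]
    · norm_num
    · filter_upwards [ae_restrict_mem measurableSet_Ioi] with r hr using hnn r hr
  rw [this, ← ENNReal.ofReal_mul (by positivity)]
  congr 1; ring

theorem integrable_inv_norm_sq_add_one_sq :
    Integrable fun x : ℂ => ((‖x‖ ^ 2 + 1) ^ 2)⁻¹ := by
  refine ⟨(by fun_prop : Measurable fun x : ℂ => ((‖x‖ ^ 2 + 1) ^ 2)⁻¹).aestronglyMeasurable, ?_⟩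
  rw [hasFiniteIntegral_iff_ofReal (ae_of_all _ fun x => by positivity),
    lintegral_inv_norm_sq_add_one_sq]
  exact ENNReal.ofReal_lt_top

theorem integral_inv_norm_sq_add_one_sq : ∫ x : ℂ, ((‖x‖ ^ 2 + 1) ^ 2)⁻¹ = Real.pi := by
  rw [integral_eq_lintegral_of_nonneg_ae (ae_of_all _ fun x => by positivity)
    integrable_inv_norm_sq_add_one_sq.1, lintegral_inv_norm_sq_add_one_sq,
    ENNReal.toReal_ofReal Real.pi_pos.le]

theorem integral_dbar_cauchyReg_mul {δ : ℝ} (hδ : 0 < δ) (g : ℂ → ℂ) (z : ℂ) :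
    ∫ w, dbar (cauchyReg (δ ^ 2)) (z - w) * g w
      = ∫ x : ℂ, (((‖x‖ ^ 2 + 1) ^ 2)⁻¹ : ℝ) * g (z - δ * x) := by
  have h1 := integral_sub_left_eq_self
    (fun y => dbar (cauchyReg (δ ^ 2)) y * g (z - y)) volume z
  simp only [sub_sub_cancel] at h1
  rw [h1]
  have h2 := Measure.integral_comp_smul volume
    (fun y => dbar (cauchyReg (δ ^ 2)) y * g (z - y)) δ
  rw [Complex.finrank_real_complex, abs_of_pos (by positivity)] at h2
  have hδ' : (δ : ℂ) ≠ 0 := by exact_mod_cast hδ.ne'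
  have h3 : ∫ y, dbar (cauchyReg (δ ^ 2)) y * g (z - y) =
      (δ : ℂ) ^ 2 * ∫ x : ℂ, dbar (cauchyReg (δ ^ 2)) (δ • x) * g (z - δ • x) := by
    rw [h2, Complex.real_smul]; push_cast; field_simp
  rw [h3, ← integral_const_mul]
  refine integral_congr_ae (ae_of_all _ fun x => ?_)
  simp only [Complex.real_smul]
  rw [dbar_cauchyReg (by positivity), ← mul_assoc]
  congr 1
  have e : ((‖x‖ ^ 2 + 1 : ℝ) : ℂ) = x * conj x + 1 := by
    rw [Complex.mul_conj, Complex.normSq_eq_norm_sq]; push_cast; ring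
  have e0 := mul_conj_add_ne_zero one_pos x
  push_cast at e0 e ⊢
  rw [e]
  simp only [map_mul, Complex.conj_ofReal]
  have : (δ : ℂ) * x * (δ * conj x) + (δ : ℂ) ^ 2 = δ ^ 2 * (x * conj x + 1) := by ring
  rw [this]
  field_simp

theorem BddIntegrable.dbar {g : ℂ → ℂ} (hg' : ∀ v, BddIntegrable fun z => fderiv ℝ g z v) :
    BddIntegrable (dbar g) := by
  have := ((hg' 1).add ((hg' I).const_mul I)).const_mul (1 / 2)
  convert this using 2 with w
  rw [_root_.dbar]; ring

/-- The Cauchy–Pompeiu formula on the whole plane. -/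
theorem dbarInv_dbar {g : ℂ → ℂ} (hd : Differentiable ℝ g)
    (hg : BddIntegrable g) (hg' : ∀ v, BddIntegrable fun z => fderiv ℝ g z v) (z : ℂ) :
    dbarInv (dbar g) z = g z := by
  have hdb : BddIntegrable (dbar g) := BddIntegrable.dbar hg'
  have hev : ∀ᶠ δ : ℝ in 𝓝[>] 0, 0 < δ := eventually_mem_nhdsWithin
  have hL : Tendsto (fun δ : ℝ => ∫ w, cauchyReg (δ ^ 2) (z - w) * dbar g w) (𝓝[>] 0)
      (𝓝 (∫ w, dbar g w / (z - w))) := by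
    refine tendsto_integral_filter_of_dominated_convergence (fun w => ‖dbar g w / (z - w)‖) ?_ ?_
      (hdb.div_sub z).norm ?_
    · filter_upwards [hev] with δ hδ
      exact (hdb.mul_bdd ((continuous_cauchyReg (pow_pos hδ 2)).comp
        (by fun_prop : Continuous fun w => z - w)) fun w => norm_cauchyReg_le (pow_pos hδ 2) _).1.1
    · filter_upwards [hev] with δ hδ
      filter_upwards [compl_mem_ae_iff.2 (measure_singleton z)] with w hw
      have hw' : z - w ≠ 0 := sub_ne_zero.2 fun h => hw h.symm
      rw [norm_mul, norm_div, div_eq_inv_mul]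
      exact mul_le_mul_of_nonneg_right (norm_cauchyReg_le_inv (pow_pos hδ 2) hw') (norm_nonneg _)
    · filter_upwards [compl_mem_ae_iff.2 (measure_singleton z)] with w hw
      have hw' : z - w ≠ 0 := sub_ne_zero.2 fun h => hw h.symm
      have hc' : conj (z - w) ≠ 0 := (map_ne_zero _).2 hw'
      have hlim : Tendsto (fun δ : ℝ => conj (z - w) / ((z - w) * conj (z - w) + ((δ ^ 2 : ℝ) : ℂ)))
          (𝓝 0) (𝓝 (conj (z - w) / ((z - w) * conj (z - w) + ((0 ^ 2 : ℝ) : ℂ)))) := by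
        refine Tendsto.div tendsto_const_nhds (Tendsto.add tendsto_const_nhds ?_) ?_
        · exact (by fun_prop : Continuous fun δ : ℝ => ((δ ^ 2 : ℝ) : ℂ)).tendsto 0
        · simpa only [ne_eq, OfNat.ofNat_ne_zero, not_false_eq_true, zero_pow, ofReal_zero,
            add_zero] using mul_ne_zero hw' hc'
      have h2 := (hlim.mono_left (nhdsWithin_le_nhds (s := Set.Ioi (0 : ℝ)))).mul_const (dbar g w)
      convert h2 using 2
      · rfl
      simp only [ne_eq, OfNat.ofNat_ne_zero, not_false_eq_true, zero_pow, ofReal_zero, add_zero]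
      field_simp
  have hR : Tendsto (fun δ : ℝ => ∫ x : ℂ, (((‖x‖ ^ 2 + 1) ^ 2)⁻¹ : ℝ) * g (z - δ * x)) (𝓝[>] 0)
      (𝓝 (∫ x : ℂ, (((‖x‖ ^ 2 + 1) ^ 2)⁻¹ : ℝ) * g z)) := by
    obtain ⟨M, hM⟩ := hg.2
    have hmeas : Measurable fun x : ℂ => ((((‖x‖ ^ 2 + 1) ^ 2)⁻¹ : ℝ) : ℂ) := by fun_prop
    refine tendsto_integral_filter_of_dominated_convergence
      (fun x => ((‖x‖ ^ 2 + 1) ^ 2)⁻¹ * M) ?_ ?_ (integrable_inv_norm_sq_add_one_sq.mul_const M) ?_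
    · refine Eventually.of_forall fun δ => ?_
      exact hmeas.aestronglyMeasurable.mul
        (hd.continuous.comp (by fun_prop : Continuous fun x : ℂ => z - δ * x)).aestronglyMeasurable
    · refine Eventually.of_forall fun δ => ae_of_all _ fun x => ?_
      rw [norm_mul, Complex.norm_real, Real.norm_of_nonneg (by positivity)]
      exact mul_le_mul_of_nonneg_left (hM _) (by positivity)
    · refine ae_of_all _ fun x => Tendsto.const_mul _ ?_
      have : Tendsto (fun δ : ℝ => g (z - δ * x)) (𝓝 0) (𝓝 (g (z - (0 : ℝ) * x))) :=
        (hd.continuous.comp (by fun_prop : Continuous fun δ : ℝ => z - δ * x)).tendsto 0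
      simpa using this.mono_left nhdsWithin_le_nhds
  have heq : ∫ w, dbar g w / (z - w) = ∫ x : ℂ, (((‖x‖ ^ 2 + 1) ^ 2)⁻¹ : ℝ) * g z := by
    refine tendsto_nhds_unique (hL.congr' ?_) hR
    filter_upwards [hev] with δ hδ
    rw [integral_cauchyReg_mul_dbar (pow_pos hδ 2) hd hg hg', integral_dbar_cauchyReg_mul hδ]
  rw [dbarInv, heq, integral_mul_const, integral_complex_ofReal, integral_inv_norm_sq_add_one_sq,
    inv_mul_cancel_left₀ (by exact_mod_cast Real.pi_ne_zero)]

theorem norm_ek (k z : ℂ) : ‖ek k z‖ = 1 := by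
  have : I * (conj k * z + k * conj z) / 2 = ((conj k * z).re : ℝ) * I := by
    have h := Complex.add_conj (conj k * z)
    simp only [map_mul, Complex.conj_conj] at h
    rw [h]; push_cast; ring
  rw [ek, this, Complex.norm_exp_ofReal_mul_I]

theorem hasFDerivAt_ek (k z : ℂ) :
    HasFDerivAt (ek k) (ek k z • ((I / 2) •
      (conj k • ContinuousLinearMap.id ℝ ℂ + k • (conjCLE : ℂ →L[ℝ] ℂ)))) z := by
  have h1 : HasFDerivAt (fun z : ℂ => (I / 2) * (conj k * z + k * conj z))
      ((I / 2) • (conj k • ContinuousLinearMap.id ℝ ℂ + k • (conjCLE : ℂ →L[ℝ] ℂ))) z :=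
    (((hasFDerivAt_id z).const_mul (conj k)).add
      ((conjCLE.hasFDerivAt (x := z)).const_mul k)).const_mul (I / 2)
  have h2 := h1.cexp
  have h3 : (fun z : ℂ => cexp ((I / 2) * (conj k * z + k * conj z))) = ek k := by
    ext z; rw [ek]; congr 1; ring
  rwa [congrFun h3 z, h3] at h2

theorem continuous_ek (k : ℂ) : Continuous (ek k) := by unfold ek; fun_prop

theorem BddIntegrable.ek_mul {g : ℂ → ℂ} (hg : BddIntegrable g) (k : ℂ) :
    BddIntegrable fun z => ek k z * g z :=
  hg.mul_bdd (continuous_ek k) fun z => (norm_ek k z).le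

theorem dbarInv_add {u v : ℂ → ℂ} (hu : BddIntegrable u) (hv : BddIntegrable v) (z : ℂ) :
    dbarInv (fun w => u w + v w) z = dbarInv u z + dbarInv v z := by
  simp only [dbarInv, add_div]
  rw [integral_add (hu.div_sub z) (hv.div_sub z), mul_add]

theorem dbarInv_const_mul (c : ℂ) (u : ℂ → ℂ) (z : ℂ) :
    dbarInv (fun w => c * u w) z = c * dbarInv u z := by
  simp only [dbarInv, mul_div_assoc]
  rw [integral_const_mul]; ring

/-- Integration by parts against the oscillating factor. -/
theorem dbarInv_ek_mul {k : ℂ} (hk : k ≠ 0) {g : ℂ → ℂ} (hd : Differentiable ℝ g)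
    (hg : BddIntegrable g) (hg' : ∀ v, BddIntegrable fun z => fderiv ℝ g z v) (z : ℂ) :
    dbarInv (fun w => ek (-k) w * g w) z =
      2 * I / k * (ek (-k) z * g z - dbarInv (fun w => ek (-k) w * dbar g w) z) := by
  have hf : ∀ w, fderiv ℝ (fun w => ek (-k) w * g w) w =
      ek (-k) w • fderiv ℝ g w + g w • (ek (-k) w • ((I / 2) •
      (conj (-k) • ContinuousLinearMap.id ℝ ℂ + (-k) • (conjCLE : ℂ →L[ℝ] ℂ)))) := fun w =>
    ((hasFDerivAt_ek (-k) w).mul (hd w).hasFDerivAt).fderiv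
  have hfv : ∀ w v, fderiv ℝ (fun w => ek (-k) w * g w) w v = ek (-k) w * fderiv ℝ g w v +
      (I / 2 * (conj (-k) * v + (-k) * conj v)) * (ek (-k) w * g w) := fun w v => by
    rw [hf]; simp; ring
  have hdb : ∀ w, dbar (fun w => ek (-k) w * g w) w =
      ek (-k) w * dbar g w + (-(I * k / 2)) * (ek (-k) w * g w) := fun w => by
    rw [dbar, hfv, hfv, dbar]
    simp only [map_neg, map_one, Complex.conj_I]
    ring_nf
    simp only [I_pow_three]
    ring
  have h := dbarInv_dbar (g := fun w => ek (-k) w * g w)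
    (Differentiable.mul (fun w => (hasFDerivAt_ek (-k) w).differentiableAt) hd)
    (hg.ek_mul _) (fun v => by
      simp_rw [hfv]
      exact ((hg' v).ek_mul _).add ((hg.ek_mul _).const_mul _)) z
  have h' : dbar (fun w => ek (-k) w * g w) = fun w =>
      ek (-k) w * dbar g w + (-(I * k / 2)) * (ek (-k) w * g w) := funext hdb
  rw [h', dbarInv_add ((BddIntegrable.dbar hg').ek_mul _) ((hg.ek_mul _).const_mul _),
    dbarInv_const_mul] at h
  rw [← h]
  field_simp
  ring_nf
  simp

theorem ek_comm (k z : ℂ) : ek k z = ek z k := by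
  unfold ek; congr 1; ring

theorem ek_add (k l z : ℂ) : ek (k + l) z = ek k z * ek l z := by
  unfold ek; rw [← Complex.exp_add]; congr 1; simp only [map_add]; ring

theorem ek_eq_exp (k z : ℂ) : ek k z = cexp (I * ((k.re * z.re + k.im * z.im : ℝ) : ℂ)) := by
  unfold ek; congr 1
  apply Complex.ext <;> simp
  ring

theorem FT_eq (f : ℂ → ℂ) (ξ : ℂ) : FT f ξ = ∫ z, ek (-(2 * Real.pi * ξ)) z * f z := by
  unfold FT; congr 1; ext z; rw [ek_eq_exp]; congr 2; push_cast; simp; ring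

theorem FTinv_eq (f : ℂ → ℂ) (x : ℂ) : FTinv f x = ∫ ξ, ek (2 * Real.pi * x) ξ * f ξ := by
  unfold FTinv; congr 1; ext z; rw [ek_eq_exp]; congr 2; push_cast; simp; ring

theorem integrable_ek_mul {f : ℂ → ℂ} (hf : Integrable f) (k : ℂ) :
    Integrable fun z => ek k z * f z :=
  hf.bdd_mul (continuous_ek k).aestronglyMeasurable (ae_of_all _ fun z => (norm_ek k z).le)

theorem continuous_FTinv {f : ℂ → ℂ} (hf : Integrable f) : Continuous (FTinv f) := by
  have : FTinv f = fun x => ∫ ξ, ek (2 * Real.pi * x) ξ * f ξ := funext (FTinv_eq f)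
  rw [this]
  refine continuous_of_dominated (bound := fun ξ => ‖f ξ‖)
    (fun x => (integrable_ek_mul hf _).1) (fun x => ae_of_all _ fun ξ => ?_) hf.norm
    (ae_of_all _ fun ξ => ?_)
  · rw [norm_mul, norm_ek, one_mul]
  · refine Continuous.mul ?_ continuous_const
    simp_rw [ek_comm _ ξ]
    exact (continuous_ek ξ).comp (by fun_prop)

theorem FT_eq_fourier (f : ℂ → ℂ) : FT f = FourierTransform.fourier f := by
  ext ξ
  rw [Real.fourier_eq, FT_eq]
  refine integral_congr_ae (ae_of_all _ fun z => ?_)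
  simp only [ek_eq_exp, Circle.smul_def, Real.fourierChar_apply, smul_eq_mul, Complex.inner]
  congr 2
  simp
  ring

theorem FTinv_eq_fourierInv (f : ℂ → ℂ) : FTinv f = FourierTransformInv.fourierInv f := by
  ext ξ
  rw [Real.fourierInv_eq, FTinv_eq]
  refine integral_congr_ae (ae_of_all _ fun z => ?_)
  simp only [ek_eq_exp, Circle.smul_def, Real.fourierChar_apply, smul_eq_mul, Complex.inner]
  congr 2
  simp
  ring

theorem FT_schwartz (G : 𝓢(ℂ, ℂ)) : FT G = ⇑(FourierTransform.fourier G) := by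
  rw [FT_eq_fourier, SchwartzMap.fourier_coe]

theorem FTinv_FT (G : 𝓢(ℂ, ℂ)) : FTinv (FT G) = G := by
  rw [FT_schwartz, FTinv_eq_fourierInv, ← SchwartzMap.fourierInv_coe,
    FourierTransform.fourierInv_fourier_eq]

/-- The Fourier transform turns `∂̄` into multiplication by `π i ξ`. -/
theorem FT_dbar {f : ℂ → ℂ} (hd : Differentiable ℝ f) (hf : Integrable f)
    (hf' : ∀ v, Integrable fun z => fderiv ℝ f z v) (ξ : ℂ) :
    FT (dbar f) ξ = Real.pi * I * ξ * FT f ξ := by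
  rw [FT_eq, FT_eq]
  set k : ℂ := -(2 * Real.pi * ξ) with hk
  have hek : ∀ z v, fderiv ℝ (ek k) z v = I / 2 * (conj k * v + k * conj v) * ek k z := by
    intro z v; rw [(hasFDerivAt_ek k z).fderiv]; simp; ring
  have key : ∀ v, ∫ z, ek k z * fderiv ℝ f z v
      = -(I / 2 * (conj k * v + k * conj v) * ∫ z, ek k z * f z) := by
    intro v
    rw [integral_mul_fderiv_eq_neg_fderiv_mul_of_integrable, ← integral_const_mul]
    · congr 2; ext z; rw [hek]; ring
    · simp_rw [hek, mul_assoc (I / 2 * (conj k * v + k * conj v))]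
      exact (integrable_ek_mul hf k).const_mul _
    · exact integrable_ek_mul (hf' v) k
    · exact integrable_ek_mul hf k
    · exact fun z _ => (hasFDerivAt_ek k z).differentiableAt
    · exact fun z _ => hd z
  have e1 : ∀ z, ek k z * dbar f z = (1 / 2 : ℂ) *
      (ek k z * fderiv ℝ f z 1 + I * (ek k z * fderiv ℝ f z I)) := by
    intro w; rw [dbar]; ring
  simp_rw [e1]
  rw [integral_const_mul, integral_add (integrable_ek_mul (hf' 1) k)
    ((integrable_ek_mul (hf' I) k).const_mul _), integral_const_mul, key, key]
  simp only [map_one, Complex.conj_I]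
  have : ξ = -k / (2 * Real.pi) := by
    have : (Real.pi : ℂ) ≠ 0 := by exact_mod_cast Real.pi_ne_zero
    rw [hk]; field_simp
  have hpi : (Real.pi : ℂ) ≠ 0 := by exact_mod_cast Real.pi_ne_zero
  rw [this]
  field_simp
  ring_nf
  simp
  ring

/-- `∂̄` as an operator on Schwartz functions. -/
noncomputable def dbarS (G : 𝓢(ℂ, ℂ)) : 𝓢(ℂ, ℂ) :=
  (2 : ℂ)⁻¹ • (LineDeriv.lineDerivOp (1 : ℂ) G + I • LineDeriv.lineDerivOp I G)

theorem dbarS_apply (G : 𝓢(ℂ, ℂ)) (z : ℂ) : dbarS G z = dbar G z := by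
  simp [dbarS, dbar, SchwartzMap.lineDerivOp_apply_eq_fderiv]; ring

theorem coe_dbarS (G : 𝓢(ℂ, ℂ)) : ⇑(dbarS G) = dbar G := funext (dbarS_apply G)

theorem SchwartzMap.bddIntegrable (G : 𝓢(ℂ, ℂ)) : BddIntegrable G :=
  ⟨G.integrable, _, G.norm_le_seminorm ℝ⟩

theorem SchwartzMap.bddIntegrable_fderiv (G : 𝓢(ℂ, ℂ)) (v : ℂ) :
    BddIntegrable fun z => fderiv ℝ G z v := by
  have := SchwartzMap.bddIntegrable (LineDeriv.lineDerivOp v G)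
  convert this using 2
  exact (SchwartzMap.lineDerivOp_apply_eq_fderiv v G _).symm

/-- Convolution on the plane. -/
noncomputable def cconv (κ g : ℂ → ℂ) (x : ℂ) : ℂ := ∫ y, κ y * g (x - y)

theorem BddIntegrable.cconv {κ g : ℂ → ℂ} (hκ : Integrable κ) (hg : BddIntegrable g) :
    BddIntegrable (cconv κ g) := by
  obtain ⟨hi, M, hM⟩ := hg
  refine ⟨hκ.integrable_convolution (ContinuousLinearMap.mul ℝ ℂ) hi, (∫ y, ‖κ y‖) * M, fun x => ?_⟩
  rw [← integral_mul_const]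
  refine norm_integral_le_of_norm_le (hκ.norm.mul_const M) (ae_of_all _ fun y => ?_)
  rw [norm_mul]
  exact mul_le_mul_of_nonneg_left (hM _) (norm_nonneg _)

theorem integrable_cconv_integrand {κ : ℂ → ℂ} (hκ : Integrable κ) (G : 𝓢(ℂ, ℂ)) (x : ℂ) :
    Integrable fun y => κ y * G (x - y) :=
  Integrable.mul_bdd (c := SchwartzMap.seminorm ℝ 0 0 G) hκ
    (G.continuous.comp (by fun_prop : Continuous fun y => x - y)).aestronglyMeasurable
    (ae_of_all _ fun y => G.norm_le_seminorm ℝ _)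

theorem hasFDerivAt_cconv {κ : ℂ → ℂ} (hκ : Integrable κ) (G : 𝓢(ℂ, ℂ)) (x : ℂ) :
    HasFDerivAt (cconv κ G) (∫ y, κ y • fderiv ℝ G (x - y)) x := by
  set G' := SchwartzMap.fderivCLM ℝ ℂ ℂ G with hG'
  have hG'c : Continuous (fderiv ℝ G) := G'.continuous
  obtain ⟨M, hM⟩ : ∃ M : ℝ, ∀ z, ‖fderiv ℝ G z‖ ≤ M := ⟨_, G'.norm_le_seminorm ℝ⟩
  refine hasFDerivAt_integral_of_dominated_of_fderiv_le (F := fun x y => κ y * G (x - y))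
    (F' := fun x y => κ y • fderiv ℝ G (x - y)) (bound := fun y => ‖κ y‖ * M)
    (s := Set.univ) Filter.univ_mem
    (Eventually.of_forall fun x => ?_) ?_ ?_ (ae_of_all _ fun y x _ => ?_) (hκ.norm.mul_const M)
    (ae_of_all _ fun y x _ => ?_)
  · exact hκ.1.mul (G.continuous.comp (by fun_prop : Continuous fun y => x - y)).aestronglyMeasurable
  · exact integrable_cconv_integrand hκ G x
  · exact hκ.1.smul (hG'c.comp (by fun_prop : Continuous fun y => x - y)).aestronglyMeasurable
  · rw [norm_smul]; exact mul_le_mul_of_nonneg_left (hM _) (norm_nonneg _)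
  · have h1 := (G.differentiableAt (x := x - y)).hasFDerivAt.comp x ((hasFDerivAt_id x).sub_const y)
    exact h1.const_mul (κ y)

theorem fderiv_cconv {κ : ℂ → ℂ} (hκ : Integrable κ) (G : 𝓢(ℂ, ℂ)) (x v : ℂ) :
    fderiv ℝ (cconv κ G) x v = cconv κ (fun z => fderiv ℝ G z v) x := by
  rw [(hasFDerivAt_cconv hκ G x).fderiv, ContinuousLinearMap.integral_apply]
  · rfl
  · set G' := SchwartzMap.fderivCLM ℝ ℂ ℂ G with hG'
    refine (hκ.norm.mul_const (SchwartzMap.seminorm ℝ 0 0 G')).mono' (hκ.1.smul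
      ((G'.continuous.comp (by fun_prop : Continuous fun y => x - y)).aestronglyMeasurable))
      (ae_of_all _ fun y => ?_)
    rw [norm_smul]
    exact mul_le_mul_of_nonneg_left (G'.norm_le_seminorm ℝ _) (norm_nonneg _)

theorem bddIntegrable_fderiv_cconv {κ : ℂ → ℂ} (hκ : Integrable κ) (G : 𝓢(ℂ, ℂ)) (v : ℂ) :
    BddIntegrable fun z => fderiv ℝ (cconv κ G) z v := by
  simp_rw [fderiv_cconv hκ]
  exact (G.bddIntegrable_fderiv v).cconv hκ

theorem dbar_cconv {κ : ℂ → ℂ} (hκ : Integrable κ) (G : 𝓢(ℂ, ℂ)) :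
    dbar (cconv κ G) = cconv κ (dbarS G) := by
  ext x
  have h1 := integrable_cconv_integrand hκ (LineDeriv.lineDerivOp (1 : ℂ) G) x
  have h2 := integrable_cconv_integrand hκ (LineDeriv.lineDerivOp I G) x
  simp only [SchwartzMap.lineDerivOp_apply_eq_fderiv] at h1 h2
  have e : ∀ y, κ y * dbarS G (x - y) = (1 / 2 : ℂ) *
      (κ y * fderiv ℝ G (x - y) 1 + I * (κ y * fderiv ℝ G (x - y) I)) := fun y => by
    rw [dbarS_apply, dbar]; ring
  rw [dbar, fderiv_cconv hκ, fderiv_cconv hκ]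
  simp only [cconv]
  simp_rw [e]
  rw [integral_const_mul, integral_add h1 (h2.const_mul _), integral_const_mul]
  ring

/-- Convolution against an inverse Fourier transform. -/
theorem cconv_FTinv {κ g : ℂ → ℂ} (hκ : Integrable κ) (hg : Integrable g) (x : ℂ) :
    cconv κ (FTinv g) x = FTinv (fun ξ => FT κ ξ * g ξ) x := by
  have h1 : ∀ y, κ y * FTinv g (x - y) =
      ∫ ξ, ek (2 * Real.pi * x) ξ * (ek (-(2 * Real.pi * ξ)) y * κ y * g ξ) := by
    intro y
    rw [FTinv_eq, ← integral_const_mul]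
    congr 1; ext ξ
    rw [mul_sub, sub_eq_add_neg, ek_add]
    have : ek (-(2 * Real.pi * y)) ξ = ek (-(2 * Real.pi * ξ)) y := by
      unfold ek; congr 1; simp only [map_neg, map_mul]; simp only [Complex.conj_ofReal, map_ofNat]; ring
    rw [this]; ring
  have h2 : ∀ ξ, ek (2 * Real.pi * x) ξ * (FT κ ξ * g ξ) =
      ∫ y, ek (2 * Real.pi * x) ξ * (ek (-(2 * Real.pi * ξ)) y * κ y * g ξ) := by
    intro ξ
    rw [integral_const_mul, integral_mul_const, FT_eq]
  rw [FTinv_eq]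
  simp_rw [cconv, h1, h2]
  refine integral_integral_swap ?_
  have hprod : Integrable (fun p : ℂ × ℂ => κ p.1 * g p.2) := hκ.mul_prod hg
  have hc : Continuous fun p : ℂ × ℂ => ek (2 * Real.pi * x) p.2 * ek (-(2 * Real.pi * p.2)) p.1 := by
    unfold ek; fun_prop
  refine (hprod.bdd_mul (c := 1) hc.aestronglyMeasurable (ae_of_all _ fun p => ?_)).congr
    (ae_of_all _ fun p => ?_)
  · rw [norm_mul, norm_ek, norm_ek, mul_one]
  · simp only [Function.uncurry]; ring

theorem integrable_norm_pow_mul_FT (G : 𝓢(ℂ, ℂ)) (n : ℕ) (c : ℂ → ℂ) (hc : Measurable c)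
    (M : ℝ) (hM : ∀ ξ, ‖c ξ‖ ≤ M * (1 + ‖ξ‖ ^ n)) : Integrable fun ξ => c ξ * FT G ξ := by
  rw [FT_schwartz]
  set H := FourierTransform.fourier G
  have h1 := (H.integrable_pow_mul volume 0).add (H.integrable_pow_mul volume n)
  refine (h1.const_mul M).mono' (hc.aestronglyMeasurable.mul H.continuous.aestronglyMeasurable)
    (ae_of_all _ fun ξ => ?_)
  rw [norm_mul]
  refine (mul_le_mul_of_nonneg_right (hM ξ) (norm_nonneg _)).trans (le_of_eq ?_)
  simp only [Pi.add_apply]; ring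

theorem integrable_norm_rpow_mul_FT {s : ℝ} (hs0 : 0 ≤ s) (hs1 : s ≤ 1) (G : 𝓢(ℂ, ℂ)) :
    Integrable fun ξ => ((‖ξ‖ ^ s : ℝ) : ℂ) * FT G ξ := by
  refine integrable_norm_pow_mul_FT G 1 _ (by fun_prop) 1 fun ξ => ?_
  rw [Complex.norm_real, Real.norm_of_nonneg (by positivity), one_mul, pow_one]
  rcases le_total ‖ξ‖ 1 with h | h
  · exact (Real.rpow_le_one (norm_nonneg _) h hs0).trans (by linarith [norm_nonneg ξ])
  · refine (Real.rpow_le_rpow_of_exponent_le h hs1).trans ?_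
    rw [Real.rpow_one]; linarith

theorem continuous_Ds {s : ℝ} (hs0 : 0 ≤ s) (hs1 : s ≤ 1) (G : 𝓢(ℂ, ℂ)) : Continuous (Ds s G) :=
  continuous_FTinv (integrable_norm_rpow_mul_FT hs0 hs1 G)

theorem integral_rpow_mul_heat {s : ℝ} (hs : 0 < s) {ξ : ℂ} (hξ : ξ ≠ 0) :
    ∫ τ in Set.Ioi (0 : ℝ), τ ^ (s / 2 - 1) * Real.exp (-(4 * Real.pi ^ 2 * ‖ξ‖ ^ 2 * τ))
      = ((2 * Real.pi) ^ s / Real.Gamma (s / 2))⁻¹ * (‖ξ‖ ^ s)⁻¹ := by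
  have h0 : 0 < ‖ξ‖ := norm_pos_iff.2 hξ
  have hpi := Real.pi_pos
  rw [Real.integral_rpow_mul_exp_neg_mul_Ioi (by linarith) (by positivity)]
  have : (1 / (4 * Real.pi ^ 2 * ‖ξ‖ ^ 2)) ^ (s / 2) = ((2 * Real.pi) ^ s)⁻¹ * (‖ξ‖ ^ s)⁻¹ := by
    rw [show 4 * Real.pi ^ 2 * ‖ξ‖ ^ 2 = (2 * Real.pi * ‖ξ‖) ^ (2 : ℝ) by
      rw [Real.rpow_two]; ring, one_div, Real.inv_rpow (by positivity),
      ← Real.rpow_mul (by positivity), show (2 : ℝ) * (s / 2) = s by ring,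
      Real.mul_rpow (by positivity) (by positivity), mul_inv]
  rw [this, inv_div]
  ring

theorem integrableOn_rpow_mul_heat {s : ℝ} (hs : 0 < s) {ξ : ℂ} (hξ : ξ ≠ 0) :
    IntegrableOn (fun τ : ℝ => τ ^ (s / 2 - 1) * Real.exp (-(4 * Real.pi ^ 2 * ‖ξ‖ ^ 2 * τ)))
      (Set.Ioi 0) := by
  have h0 : 0 < ‖ξ‖ := norm_pos_iff.2 hξ
  have hpi := Real.pi_pos
  refine Integrable.of_integral_ne_zero ?_
  rw [integral_rpow_mul_heat hs hξ]
  have := Real.Gamma_pos_of_pos (by linarith : 0 < s / 2)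
  positivity

/-- A Fourier multiplier written as a superposition of convolutions against `D^s G`. -/
theorem FTinv_mul_FT_eq_integral {s : ℝ} (hs0 : 0 < s) (hs1 : s ≤ 1) (G : 𝓢(ℂ, ℂ))
    {κ : ℝ → ℂ → ℂ} {h : ℂ → ℂ} (hκi : ∀ τ, 0 < τ → Integrable (κ τ))
    (hh : Measurable h)
    (hκ : ∀ τ, 0 < τ → ∀ ξ, FT (κ τ) ξ
      = h ξ * (Real.exp (-(4 * Real.pi ^ 2 * ‖ξ‖ ^ 2 * τ)) : ℝ))
    (hG : Integrable fun ξ => h ξ * FT G ξ) (x : ℂ) :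
    FTinv (fun ξ => h ξ * FT G ξ) x = ((2 * Real.pi) ^ s / Real.Gamma (s / 2) : ℝ) *
      ∫ τ in Set.Ioi (0 : ℝ), ((τ ^ (s / 2 - 1) : ℝ) : ℂ) * cconv (κ τ) (Ds s G) x := by
  have hpi := Real.pi_pos
  have hΓ := Real.Gamma_pos_of_pos (by linarith : 0 < s / 2)
  set c : ℝ := (2 * Real.pi) ^ s / Real.Gamma (s / 2) with hc
  have hc0 : 0 < c := by positivity
  set m : ℂ → ℝ → ℝ := fun ξ τ =>
    τ ^ (s / 2 - 1) * Real.exp (-(4 * Real.pi ^ 2 * ‖ξ‖ ^ 2 * τ)) with hm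
  have hne : ∀ᵐ ξ : ℂ, ξ ≠ 0 := compl_mem_ae_iff.2 (measure_singleton 0)
  have hFTm : Measurable (FT G) := by
    rw [FT_schwartz]; exact (FourierTransform.fourier G).continuous.measurable
  have hA : ∀ τ ∈ Set.Ioi (0 : ℝ), ((τ ^ (s / 2 - 1) : ℝ) : ℂ) * cconv (κ τ) (Ds s G) x =
      ∫ ξ, ek (2 * Real.pi * x) ξ * ((m ξ τ : ℝ) * (((‖ξ‖ ^ s : ℝ) : ℂ) * (h ξ * FT G ξ))) := by
    intro τ hτ
    rw [Ds, cconv_FTinv (hκi τ hτ) (integrable_norm_rpow_mul_FT hs0.le hs1 G), FTinv_eq,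
      ← integral_const_mul]
    congr 1; ext ξ
    rw [hκ τ hτ]; simp only [hm]; push_cast; ring
  rw [setIntegral_congr_fun measurableSet_Ioi hA, integral_integral_swap, FTinv_eq,
    ← integral_const_mul]
  · refine integral_congr_ae ?_
    filter_upwards [hne] with ξ hξ
    have h0 : 0 < ‖ξ‖ := norm_pos_iff.2 hξ
    rw [integral_const_mul, integral_mul_const, integral_complex_ofReal,
      integral_rpow_mul_heat hs0 hξ]
    have h1 : ((‖ξ‖ ^ s : ℝ) : ℂ) ≠ 0 := by
      exact_mod_cast (Real.rpow_pos_of_pos h0 s).ne'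
    have h2 : (c : ℂ) ≠ 0 := by exact_mod_cast hc0.ne'
    push_cast [← hc] at *
    field_simp
  · have hmeas : Measurable (fun p : ℝ × ℂ => ek (2 * Real.pi * x) p.2 *
        ((m p.2 p.1 : ℝ) * (((‖p.2‖ ^ s : ℝ) : ℂ) * (h p.2 * FT G p.2)))) := by
      have := (continuous_ek (2 * Real.pi * x)).measurable
      simp only [hm]
      fun_prop
    refine (integrable_prod_iff' hmeas.aestronglyMeasurable).2 ⟨?_, ?_⟩
    · filter_upwards [hne] with ξ hξ
      exact (((integrableOn_rpow_mul_heat hs0 hξ).ofReal (𝕜 := ℂ)).mul_const _).const_mul _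
    · refine (hG.norm.const_mul c⁻¹).congr ?_
      filter_upwards [hne] with ξ hξ
      have h0 : 0 < ‖ξ‖ := norm_pos_iff.2 hξ
      have e : ∀ τ ∈ Set.Ioi (0 : ℝ), ‖ek (2 * Real.pi * x) ξ *
          ((m ξ τ : ℝ) * (((‖ξ‖ ^ s : ℝ) : ℂ) * (h ξ * FT G ξ)))‖ =
          m ξ τ * (‖ξ‖ ^ s * ‖h ξ * FT G ξ‖) := by
        intro τ hτ
        have hτ' : 0 < τ := hτ
        rw [norm_mul, norm_ek, one_mul, norm_mul, norm_mul, Complex.norm_real, Complex.norm_real,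
          Real.norm_of_nonneg (by positivity), Real.norm_of_nonneg (by positivity)]
      rw [setIntegral_congr_fun measurableSet_Ioi e, integral_mul_const,
        integral_rpow_mul_heat hs0 hξ, ← hc]
      have h1 := (Real.rpow_pos_of_pos h0 s).ne'
      field_simp

theorem enorm_FTinv_mul_FT_le {s : ℝ} (hs0 : 0 < s) (hs1 : s ≤ 1) (G : 𝓢(ℂ, ℂ))
    {κ : ℝ → ℂ → ℂ} {h : ℂ → ℂ} (hκm : Measurable (Function.uncurry κ))
    (hκi : ∀ τ, 0 < τ → Integrable (κ τ)) (hh : Measurable h)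
    (hκ : ∀ τ, 0 < τ → ∀ ξ, FT (κ τ) ξ
      = h ξ * (Real.exp (-(4 * Real.pi ^ 2 * ‖ξ‖ ^ 2 * τ)) : ℝ))
    (hG : Integrable fun ξ => h ξ * FT G ξ) (x : ℂ) :
    ‖FTinv (fun ξ => h ξ * FT G ξ) x‖ₑ ≤
      ∫⁻ y, (ENNReal.ofReal ((2 * Real.pi) ^ s / Real.Gamma (s / 2)) *
        ∫⁻ τ in Set.Ioi (0 : ℝ), ENNReal.ofReal (τ ^ (s / 2 - 1)) * ‖κ τ y‖ₑ) *
          ‖Ds s G (x - y)‖ₑ := by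
  have hpi := Real.pi_pos
  have hΓ := Real.Gamma_pos_of_pos (by linarith : 0 < s / 2)
  have hDm := (continuous_Ds hs0.le hs1 G).measurable
  have hin : Measurable fun p : ℝ × ℂ => ENNReal.ofReal (p.1 ^ (s / 2 - 1)) * ‖κ p.1 p.2‖ₑ :=
    (by fun_prop : Measurable fun p : ℝ × ℂ => ENNReal.ofReal (p.1 ^ (s / 2 - 1))).mul hκm.enorm
  have hin' : Measurable fun y : ℂ =>
      ∫⁻ τ in Set.Ioi (0 : ℝ), ENNReal.ofReal (τ ^ (s / 2 - 1)) * ‖κ τ y‖ₑ :=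
    Measurable.lintegral_prod_left hin
  rw [FTinv_mul_FT_eq_integral hs0 hs1 G hκi hh hκ hG, enorm_mul]
  have e1 : ‖(((2 * Real.pi) ^ s / Real.Gamma (s / 2) : ℝ) : ℂ)‖ₑ =
      ENNReal.ofReal ((2 * Real.pi) ^ s / Real.Gamma (s / 2)) := by
    rw [← ofReal_norm, Complex.norm_real, Real.norm_of_nonneg (by positivity)]
  rw [e1]
  have hin2 : Measurable fun y : ℂ => (∫⁻ τ in Set.Ioi (0 : ℝ),
      ENNReal.ofReal (τ ^ (s / 2 - 1)) * ‖κ τ y‖ₑ) * ‖Ds s G (x - y)‖ₑ := hin'.mul (by fun_prop)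
  simp_rw [mul_assoc]
  rw [lintegral_const_mul _ hin2]
  refine mul_le_mul' le_rfl ((enorm_integral_le_lintegral_enorm _).trans ?_)
  calc ∫⁻ τ in Set.Ioi (0 : ℝ), ‖((τ ^ (s / 2 - 1) : ℝ) : ℂ) * cconv (κ τ) (Ds s G) x‖ₑ
      ≤ ∫⁻ τ in Set.Ioi (0 : ℝ), ∫⁻ y, ENNReal.ofReal (τ ^ (s / 2 - 1)) * ‖κ τ y‖ₑ *
          ‖Ds s G (x - y)‖ₑ := by
        refine setLIntegral_mono' measurableSet_Ioi fun τ hτ => ?_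
        have hτ' : 0 < τ := hτ
        have hκτ : Measurable (κ τ) := hκm.comp (measurable_const.prodMk measurable_id)
        simp_rw [mul_assoc]
        rw [lintegral_const_mul _ (by fun_prop), enorm_mul]
        refine mul_le_mul' (le_of_eq ?_) ((enorm_integral_le_lintegral_enorm _).trans ?_)
        · rw [← ofReal_norm, Complex.norm_real, Real.norm_of_nonneg (by positivity)]
        · simp_rw [enorm_mul]; exact le_rfl
    _ = ∫⁻ y, ∫⁻ τ in Set.Ioi (0 : ℝ), ENNReal.ofReal (τ ^ (s / 2 - 1)) * ‖κ τ y‖ₑ *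
          ‖Ds s G (x - y)‖ₑ := by
        refine lintegral_lintegral_swap (Measurable.aemeasurable ?_)
        exact hin.mul (by fun_prop)
    _ = _ := by
        refine lintegral_congr fun y => ?_
        rw [lintegral_mul_const]
        exact hin.comp (measurable_id.prodMk measurable_const)

/-- The `j`-th `∂̄`-derivative of the two-dimensional heat kernel at time `τ`. -/
noncomputable def heatKernel (j : ℕ) (τ : ℝ) (z : ℂ) : ℂ :=
  (-z / (4 * τ)) ^ j * ((4 * Real.pi * τ)⁻¹ * cexp (-(z * conj z) / (4 * τ)))

theorem heatKernel_zero (τ : ℝ) (z : ℂ) : heatKernel 0 τ z =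
    (((4 * Real.pi * τ)⁻¹ * Real.exp (-(‖z‖ ^ 2 / (4 * τ))) : ℝ) : ℂ) := by
  rw [heatKernel, Complex.mul_conj, Complex.normSq_eq_norm_sq]
  push_cast
  rw [pow_zero, one_mul, neg_div]

theorem heatKernel_succ (j : ℕ) (τ : ℝ) (z : ℂ) :
    heatKernel (j + 1) τ z = -z / (4 * τ) * heatKernel j τ z := by
  rw [heatKernel, heatKernel, pow_succ]; ring

theorem norm_heatKernel_zero {τ : ℝ} (hτ : 0 < τ) (z : ℂ) :
    ‖heatKernel 0 τ z‖ = (4 * Real.pi * τ)⁻¹ * Real.exp (-(‖z‖ ^ 2 / (4 * τ))) := by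
  have := Real.pi_pos
  rw [heatKernel_zero, Complex.norm_real, Real.norm_of_nonneg (by positivity)]

theorem norm_heatKernel_succ {τ : ℝ} (hτ : 0 < τ) (j : ℕ) (z : ℂ) :
    ‖heatKernel (j + 1) τ z‖ = ‖z‖ / (4 * τ) * ‖heatKernel j τ z‖ := by
  rw [heatKernel_succ, norm_mul, norm_div, norm_neg, norm_mul, Complex.norm_real,
    Real.norm_of_nonneg hτ.le]
  simp

theorem norm_heatKernel {τ : ℝ} (hτ : 0 < τ) (j : ℕ) (z : ℂ) :
    ‖heatKernel j τ z‖ =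
      (‖z‖ / (4 * τ)) ^ j * ((4 * Real.pi * τ)⁻¹ * Real.exp (-(‖z‖ ^ 2 / (4 * τ)))) := by
  induction j with
  | zero => rw [norm_heatKernel_zero hτ, pow_zero, one_mul]
  | succ j ih => rw [norm_heatKernel_succ hτ, ih, pow_succ]; ring

theorem measurable_heatKernel (j : ℕ) : Measurable (Function.uncurry (heatKernel j)) := by
  unfold heatKernel Function.uncurry
  fun_prop

theorem measurable_heatKernel_add (j : ℕ) (t : ℝ) :
    Measurable (Function.uncurry fun τ => heatKernel j (τ + t)) := by
  unfold heatKernel Function.uncurry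
  fun_prop

theorem continuous_heatKernel (j : ℕ) (τ : ℝ) : Continuous (heatKernel j τ) := by
  unfold heatKernel
  fun_prop

theorem integrable_exp_neg_mul_norm_sq {b : ℝ} (hb : 0 < b) :
    Integrable fun z : ℂ => Real.exp (-b * ‖z‖ ^ 2) := by
  refine Integrable.of_integral_ne_zero ?_
  rw [GaussianFourier.integral_rexp_neg_mul_sq_norm hb]
  have := Real.pi_pos
  positivity

theorem integrable_norm_pow_mul_exp {b : ℝ} (hb : 0 < b) (j : ℕ) :
    Integrable fun z : ℂ => ‖z‖ ^ j * Real.exp (-b * ‖z‖ ^ 2) := by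
  have hb2 : 0 < b / 2 := by linarith
  refine ((integrable_exp_neg_mul_norm_sq hb2).const_mul
    (1 + (2 / b) ^ j * (j.factorial : ℝ))).mono'
    (by fun_prop : Measurable fun z : ℂ => ‖z‖ ^ j * Real.exp (-b * ‖z‖ ^ 2)).aestronglyMeasurable
    (ae_of_all _ fun z => ?_)
  have h0 : (0 : ℝ) ≤ ‖z‖ ^ j := by positivity
  rw [Real.norm_of_nonneg (by positivity)]
  have h1 : ‖z‖ ^ j ≤ 1 + (‖z‖ ^ 2) ^ j := by
    rw [← pow_mul, mul_comm 2 j, pow_mul]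
    nlinarith [sq_nonneg (‖z‖ ^ j - 1)]
  have h2 : (‖z‖ ^ 2) ^ j ≤ (2 / b) ^ j * j.factorial * Real.exp (b / 2 * ‖z‖ ^ 2) := by
    have h := Real.pow_div_factorial_le_exp (b / 2 * ‖z‖ ^ 2) (by positivity) j
    rw [div_le_iff₀ (by positivity)] at h
    have e : (‖z‖ ^ 2) ^ j = (2 / b) ^ j * (b / 2 * ‖z‖ ^ 2) ^ j := by
      rw [← mul_pow]; congr 1; field_simp
    rw [e, mul_assoc]
    exact mul_le_mul_of_nonneg_left (h.trans (le_of_eq (mul_comm _ _))) (by positivity)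
  have h3 : (1 : ℝ) ≤ Real.exp (b / 2 * ‖z‖ ^ 2) := Real.one_le_exp (by positivity)
  have e : Real.exp (-b * ‖z‖ ^ 2) =
      Real.exp (-(b / 2) * ‖z‖ ^ 2) * Real.exp (-(b / 2) * ‖z‖ ^ 2) := by
    rw [← Real.exp_add]; congr 1; ring
  have e' : Real.exp (b / 2 * ‖z‖ ^ 2) * Real.exp (-(b / 2) * ‖z‖ ^ 2) = 1 := by
    rw [← Real.exp_add, ← Real.exp_zero]; congr 1; ring
  calc ‖z‖ ^ j * Real.exp (-b * ‖z‖ ^ 2)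
      ≤ ((1 + (2 / b) ^ j * j.factorial) * Real.exp (b / 2 * ‖z‖ ^ 2)) *
        Real.exp (-b * ‖z‖ ^ 2) := mul_le_mul_of_nonneg_right (by linarith) (Real.exp_pos _).le
    _ = (1 + (2 / b) ^ j * j.factorial) * Real.exp (-(b / 2) * ‖z‖ ^ 2) *
        (Real.exp (b / 2 * ‖z‖ ^ 2) * Real.exp (-(b / 2) * ‖z‖ ^ 2)) := by rw [e]; ring
    _ = _ := by rw [e', mul_one]

theorem integrable_heatKernel {τ : ℝ} (hτ : 0 < τ) (j : ℕ) : Integrable (heatKernel j τ) := by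
  have hpi := Real.pi_pos
  refine ((integrable_norm_pow_mul_exp (by positivity : 0 < 1 / (4 * τ)) j).const_mul
    ((1 / (4 * τ)) ^ j * (4 * Real.pi * τ)⁻¹)).mono'
    (continuous_heatKernel j τ).aestronglyMeasurable (ae_of_all _ fun z => le_of_eq ?_)
  rw [norm_heatKernel hτ, div_eq_mul_one_div ‖z‖, mul_pow,
    show -(‖z‖ ^ 2 / (4 * τ)) = -(1 / (4 * τ)) * ‖z‖ ^ 2 by ring]
  ring

theorem integral_norm_heatKernel_zero {τ : ℝ} (hτ : 0 < τ) :
    ∫ z, ‖heatKernel 0 τ z‖ = 1 := by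
  have hpi := Real.pi_pos
  simp_rw [norm_heatKernel_zero hτ]
  rw [integral_const_mul]
  have : ∀ z : ℂ, Real.exp (-(‖z‖ ^ 2 / (4 * τ))) = Real.exp (-(1 / (4 * τ)) * ‖z‖ ^ 2) :=
    fun z => by congr 1; ring
  simp_rw [this]
  rw [GaussianFourier.integral_rexp_neg_mul_sq_norm (by positivity), Complex.finrank_real_complex]
  norm_num
  field_simp

theorem lintegral_enorm_heatKernel_zero {τ : ℝ} (hτ : 0 < τ) :
    ∫⁻ z, ‖heatKernel 0 τ z‖ₑ = 1 := by
  rw [← ofReal_integral_norm_eq_lintegral_enorm (integrable_heatKernel hτ 0),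
    integral_norm_heatKernel_zero hτ, ENNReal.ofReal_one]

theorem hasFDerivAt_heatKernel_zero (τ : ℝ) (z : ℂ) :
    HasFDerivAt (heatKernel 0 τ) ((-heatKernel 0 τ z / (4 * τ)) •
      (z • (conjCLE : ℂ →L[ℝ] ℂ) + conj z • ContinuousLinearMap.id ℝ ℂ)) z := by
  have h1 : HasFDerivAt (fun w : ℂ => w * conj w)
      (z • (conjCLE : ℂ →L[ℝ] ℂ) + conj z • ContinuousLinearMap.id ℝ ℂ) z :=
    (hasFDerivAt_id (𝕜 := ℝ) z).mul (conjCLE : ℂ →L[ℝ] ℂ).hasFDerivAt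
  have h2 := ((h1.const_mul (-(4 * (τ : ℂ))⁻¹)).cexp).const_mul ((4 * Real.pi * τ : ℂ)⁻¹)
  have e : heatKernel 0 τ = fun w : ℂ => (4 * Real.pi * τ : ℂ)⁻¹ *
      cexp (-(4 * (τ : ℂ))⁻¹ * (w * conj w)) := by
    ext w; rw [heatKernel, pow_zero, one_mul]; push_cast; congr 2; ring
  rw [e]
  refine h2.congr_fderiv ?_
  ext
  simp
  ring

theorem hasFDerivAt_heatKernel (j : ℕ) (τ : ℝ) (z : ℂ) :
    HasFDerivAt (heatKernel j τ)
      (((-z / (4 * τ)) ^ j * (-heatKernel 0 τ z / (4 * τ))) •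
          (z • (conjCLE : ℂ →L[ℝ] ℂ) + conj z • ContinuousLinearMap.id ℝ ℂ) +
        ((j : ℂ) * (-z / (4 * τ)) ^ (j - 1) * (-1 / (4 * τ)) * heatKernel 0 τ z) •
          ContinuousLinearMap.id ℝ ℂ) z := by
  have h0 : HasFDerivAt (fun w : ℂ => -w / (4 * (τ : ℂ)))
      ((-1 / (4 * τ) : ℂ) • ContinuousLinearMap.id ℝ ℂ) z := by
    have := (hasFDerivAt_id (𝕜 := ℝ) z).const_mul (-1 / (4 * τ) : ℂ)
    refine this.congr_of_eventuallyEq (Eventually.of_forall fun w => ?_)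
    simp; ring
  have h1 := (h0.pow j).mul (hasFDerivAt_heatKernel_zero τ z)
  have e : heatKernel j τ = fun w : ℂ => (-w / (4 * τ)) ^ j * heatKernel 0 τ w := by
    ext w; rw [heatKernel, heatKernel, pow_zero, one_mul]
  rw [e]
  refine h1.congr_fderiv ?_
  ext
  simp
  ring

theorem differentiable_heatKernel (j : ℕ) (τ : ℝ) : Differentiable ℝ (heatKernel j τ) :=
  fun z => (hasFDerivAt_heatKernel j τ z).differentiableAt

theorem fderiv_heatKernel (j : ℕ) (τ : ℝ) (z v : ℂ) : fderiv ℝ (heatKernel j τ) z v =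
    heatKernel (j + 1) τ z * conj v +
      (conj z * v * (-1 / (4 * τ)) * heatKernel j τ z +
        (j : ℂ) * (-1 / (4 * τ)) * v * heatKernel (j - 1) τ z) := by
  rw [(hasFDerivAt_heatKernel j τ z).fderiv]
  simp only [heatKernel, pow_succ]
  simp
  ring

theorem integrable_fderiv_heatKernel {τ : ℝ} (hτ : 0 < τ) (j : ℕ) (v : ℂ) :
    Integrable fun z => fderiv ℝ (heatKernel j τ) z v := by
  simp_rw [fderiv_heatKernel]
  refine ((integrable_heatKernel hτ (j + 1)).mul_const _).add
    (Integrable.add ?_ ((integrable_heatKernel hτ (j - 1)).const_mul _))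
  refine ((integrable_heatKernel hτ (j + 1)).norm.const_mul ‖v‖).mono'
    (Continuous.aestronglyMeasurable ?_) (ae_of_all _ fun z => le_of_eq ?_)
  · have := continuous_heatKernel j τ
    fun_prop
  · rw [norm_heatKernel_succ hτ]
    simp only [norm_mul, norm_div, norm_neg, Complex.norm_real, RCLike.norm_conj, norm_one,
      Real.norm_of_nonneg hτ.le, Complex.norm_ofNat]
    ring

theorem dbar_heatKernel (j : ℕ) (τ : ℝ) : dbar (heatKernel j τ) = heatKernel (j + 1) τ := by
  ext z
  rw [dbar, fderiv_heatKernel, fderiv_heatKernel]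
  simp
  ring_nf
  simp
  ring

theorem FT_heatKernel {τ : ℝ} (hτ : 0 < τ) (j : ℕ) (ξ : ℂ) : FT (heatKernel j τ) ξ =
    (Real.pi * I * ξ) ^ j * (Real.exp (-(4 * Real.pi ^ 2 * ‖ξ‖ ^ 2 * τ)) : ℝ) := by
  have hpi := Real.pi_pos
  induction j with
  | zero =>
    have e : heatKernel 0 τ = fun z : ℂ => (4 * Real.pi * τ : ℂ)⁻¹ *
        cexp (-(1 / (4 * τ) : ℝ) * ‖z‖ ^ 2) := by
      ext w
      rw [heatKernel_zero]; push_cast; congr 2; ring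
    have hb : (0 : ℝ) < (((1 / (4 * τ) : ℝ)) : ℂ).re := by
      rw [Complex.ofReal_re]; positivity
    have h := fourier_gaussian_innerProductSpace (V := ℂ) hb ξ
    rw [FT_eq, e]
    have e2 : ∀ z, ek (-(2 * Real.pi * ξ)) z * ((4 * Real.pi * τ : ℂ)⁻¹ *
        cexp (-(1 / (4 * τ) : ℝ) * ‖z‖ ^ 2)) = (4 * Real.pi * τ : ℂ)⁻¹ *
        (ek (-(2 * Real.pi * ξ)) z * cexp (-(1 / (4 * τ) : ℝ) * ‖z‖ ^ 2)) := fun z => by ring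
    simp_rw [e2]
    rw [integral_const_mul, ← FT_eq, FT_eq_fourier, h, Complex.finrank_real_complex]
    have hτ' : (τ : ℂ) ≠ 0 := by exact_mod_cast hτ.ne'
    have hpi' : (Real.pi : ℂ) ≠ 0 := by exact_mod_cast hpi.ne'
    push_cast
    rw [show ((2 : ℂ) / 2) = 1 by norm_num, Complex.cpow_one,
      show -(Real.pi : ℂ) ^ 2 * (‖ξ‖ : ℂ) ^ 2 / (1 / (4 * (τ : ℂ))) =
        -(4 * (Real.pi : ℂ) ^ 2 * (‖ξ‖ : ℂ) ^ 2 * τ) by field_simp]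
    field_simp
  | succ j ih =>
    rw [← dbar_heatKernel, FT_dbar (differentiable_heatKernel j τ) (integrable_heatKernel hτ j)
      (integrable_fderiv_heatKernel hτ j), ih, pow_succ]
    ring

theorem norm_heatKernel_zero_le {σ : ℝ} (hσ : 0 < σ) (y : ℂ) :
    ‖heatKernel 0 σ y‖ ≤ (σ + ‖y‖ ^ 2) ^ (-1 : ℝ) := by
  have hpi := Real.pi_gt_three
  rw [norm_heatKernel_zero hσ, Real.rpow_neg_one, le_inv_comm₀ (by positivity) (by positivity),
    mul_inv, inv_inv, ← Real.exp_neg, neg_neg]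
  have h := Real.add_one_le_exp (‖y‖ ^ 2 / (4 * σ))
  have h2 : σ + ‖y‖ ^ 2 ≤ 4 * σ * (‖y‖ ^ 2 / (4 * σ) + 1) := by
    have : 4 * σ * (‖y‖ ^ 2 / (4 * σ) + 1) = ‖y‖ ^ 2 + 4 * σ := by field_simp
    linarith
  have h3 : 4 * σ ≤ 4 * Real.pi * σ := by nlinarith
  calc σ + ‖y‖ ^ 2 ≤ 4 * σ * (‖y‖ ^ 2 / (4 * σ) + 1) := h2
    _ ≤ 4 * Real.pi * σ * Real.exp (‖y‖ ^ 2 / (4 * σ)) :=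
      mul_le_mul h3 h (by positivity) (by positivity)

theorem norm_heatKernel_one_le {σ : ℝ} (hσ : 0 < σ) (y : ℂ) :
    ‖heatKernel 1 σ y‖ ≤ ‖y‖⁻¹ * σ⁻¹ := by
  have hpi := Real.pi_gt_three
  rcases eq_or_ne y 0 with rfl | hy
  · simp [heatKernel]
  have hy0 : 0 < ‖y‖ := norm_pos_iff.2 hy
  rw [norm_heatKernel hσ, pow_one, Real.exp_neg, ← mul_inv,
    show ‖y‖ / (4 * σ) * (4 * Real.pi * σ * Real.exp (‖y‖ ^ 2 / (4 * σ)))⁻¹ =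
      ‖y‖⁻¹ * σ⁻¹ * ((‖y‖ ^ 2 / (4 * σ)) / (4 * Real.pi * Real.exp (‖y‖ ^ 2 / (4 * σ)))) by
        field_simp]
  refine mul_le_of_le_one_right (by positivity) ((div_le_one (by positivity)).2 ?_)
  nlinarith [Real.add_one_le_exp (‖y‖ ^ 2 / (4 * σ)), Real.exp_pos (‖y‖ ^ 2 / (4 * σ))]

theorem norm_heatKernel_two_le {σ : ℝ} (hσ : 0 < σ) (y : ℂ) :
    ‖heatKernel 2 σ y‖ ≤ σ⁻¹ * ‖heatKernel 0 (2 * σ) y‖ := by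
  have hpi := Real.pi_pos
  rw [norm_heatKernel hσ, norm_heatKernel_zero (by positivity)]
  have h := Real.add_one_le_exp (‖y‖ ^ 2 / (8 * σ))
  have e : Real.exp (-(‖y‖ ^ 2 / (4 * σ))) =
      Real.exp (-(‖y‖ ^ 2 / (8 * σ))) * Real.exp (-(‖y‖ ^ 2 / (8 * σ))) := by
    rw [← Real.exp_add]; congr 1; ring
  have e' : Real.exp (‖y‖ ^ 2 / (8 * σ)) * Real.exp (-(‖y‖ ^ 2 / (8 * σ))) = 1 := by
    rw [← Real.exp_add, add_neg_cancel, Real.exp_zero]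
  rw [e, show 4 * (2 * σ) = 8 * σ by ring, show 4 * Real.pi * (2 * σ) = 8 * Real.pi * σ by ring,
    show (‖y‖ / (4 * σ)) ^ 2 * ((4 * Real.pi * σ)⁻¹ * (Real.exp (-(‖y‖ ^ 2 / (8 * σ))) *
      Real.exp (-(‖y‖ ^ 2 / (8 * σ))))) = σ⁻¹ * ((8 * Real.pi * σ)⁻¹ *
      Real.exp (-(‖y‖ ^ 2 / (8 * σ)))) *
        (‖y‖ ^ 2 / (8 * σ) * Real.exp (-(‖y‖ ^ 2 / (8 * σ)))) by field_simp; norm_num]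
  refine mul_le_of_le_one_right (by positivity) ?_
  rw [← e']
  exact mul_le_mul_of_nonneg_right (by linarith) (Real.exp_pos _).le

theorem lintegral_enorm_heatKernel_two_le {σ : ℝ} (hσ : 0 < σ) :
    ∫⁻ y, ‖heatKernel 2 σ y‖ₑ ≤ ENNReal.ofReal (σ ^ (-1 : ℝ)) := by
  calc ∫⁻ y, ‖heatKernel 2 σ y‖ₑ
      ≤ ∫⁻ y, ENNReal.ofReal (σ ^ (-1 : ℝ)) * ‖heatKernel 0 (2 * σ) y‖ₑ := by
        refine lintegral_mono fun y => ?_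
        rw [← ofReal_norm, ← ofReal_norm, ← ENNReal.ofReal_mul (by positivity), Real.rpow_neg_one]
        exact ENNReal.ofReal_le_ofReal (norm_heatKernel_two_le hσ y)
    _ = _ := by
        rw [lintegral_const_mul _ (continuous_heatKernel 0 _).measurable.enorm,
          lintegral_enorm_heatKernel_zero (by positivity), mul_one]

theorem norm_heatKernel_sub_le {τ t : ℝ} (hτ : 0 < τ) (ht : 0 < t) (y : ℂ) :
    ‖heatKernel 0 τ y - heatKernel 0 (τ + t) y‖ ≤
      (2 * t / (τ + t) - 1) * ‖heatKernel 0 τ y‖ + ‖heatKernel 0 (τ + t) y‖ := by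
  have hpi := Real.pi_pos
  have hτt : 0 < τ + t := by positivity
  rw [norm_heatKernel_zero hτ, norm_heatKernel_zero hτt, heatKernel_zero, heatKernel_zero,
    ← Complex.ofReal_sub, Complex.norm_real, Real.norm_eq_abs]
  set A := (4 * Real.pi * τ)⁻¹ * Real.exp (-(‖y‖ ^ 2 / (4 * τ)))
  set B := (4 * Real.pi * (τ + t))⁻¹ * Real.exp (-(‖y‖ ^ 2 / (4 * (τ + t)))) with hB
  have h : τ / (τ + t) * A ≤ B := by
    rw [show τ / (τ + t) * A = (4 * Real.pi * (τ + t))⁻¹ * Real.exp (-(‖y‖ ^ 2 / (4 * τ))) by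
      simp only [A]; field_simp]
    refine mul_le_mul_of_nonneg_left (Real.exp_le_exp.2 (neg_le_neg ?_)) (by positivity)
    exact div_le_div_of_nonneg_left (by positivity) (by positivity) (by linarith)
  have hA : 0 ≤ A := by positivity
  have e : τ / (τ + t) = 1 - t / (τ + t) := by field_simp; ring
  have h0 : 0 ≤ t / (τ + t) * A := by positivity
  rw [e] at h
  rw [mul_div_assoc]
  exact abs_le.2 ⟨by linarith, by linarith⟩

theorem lintegral_enorm_heatKernel_sub_le {τ t : ℝ} (hτ : 0 < τ) (ht : 0 < t) :
    ∫⁻ y, ‖heatKernel 0 τ y - heatKernel 0 (τ + t) y‖ₑ ≤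
      ENNReal.ofReal (2 * t) * ENNReal.ofReal ((τ + t) ^ (-1 : ℝ)) := by
  have hτt : 0 < τ + t := by positivity
  have i1 := integrable_heatKernel hτ 0
  have i2 := integrable_heatKernel hτt 0
  have i3 : Integrable fun y => heatKernel 0 τ y - heatKernel 0 (τ + t) y := i1.sub i2
  have h := integral_mono i3.norm ((i1.norm.const_mul _).add i2.norm)
    fun y => norm_heatKernel_sub_le hτ ht y
  have e : ∫ y, ((2 * t / (τ + t) - 1) * ‖heatKernel 0 τ y‖ + ‖heatKernel 0 (τ + t) y‖) =
      2 * t / (τ + t) := by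
    rw [integral_add (i1.norm.const_mul _) i2.norm, integral_const_mul,
      integral_norm_heatKernel_zero hτ, integral_norm_heatKernel_zero hτt]
    ring
  rw [← ENNReal.ofReal_mul (by positivity), Real.rpow_neg_one, ← div_eq_mul_inv,
    ← ofReal_integral_norm_eq_lintegral_enorm i3]
  exact ENNReal.ofReal_le_ofReal (h.trans e.le)

theorem lintegral_rpow_mul_inv_le {s : ℝ} (hs0 : 0 < s) (hs1 : s ≤ 1) {a : ℝ} (ha : 0 < a) :
    ∫⁻ τ in Set.Ioi (0 : ℝ), ENNReal.ofReal (τ ^ (s / 2 - 1)) *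
        ENNReal.ofReal ((τ + a) ^ (-1 : ℝ)) ≤
      ENNReal.ofReal ((1 / (s / 2) + 1 / (1 - s / 2)) * a ^ (s / 2 - 1)) :=
  lintegral_rpow_mul_add_rpow_le (by linarith) (by linarith) ha

theorem lintegral_heatKernel_zero_le {s : ℝ} (hs0 : 0 < s) (hs1 : s ≤ 1) {t : ℝ} (ht : 0 < t)
    (y : ℂ) :
    ∫⁻ τ in Set.Ioi (0 : ℝ), ENNReal.ofReal (τ ^ (s / 2 - 1)) * ‖heatKernel 0 (τ + t) y‖ₑ ≤
      ENNReal.ofReal ((1 / (s / 2) + 1 / (1 - s / 2)) * t ^ ((s - 1) / 2)) * ‖y‖ₑ⁻¹ := by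
  have hc : 0 < 1 / (s / 2) + 1 / (1 - s / 2) := by
    have : 0 < 1 - s / 2 := by linarith
    positivity
  rcases eq_or_ne y 0 with rfl | hy
  · rw [enorm_zero, ENNReal.inv_zero, ENNReal.mul_top]
    · exact le_top
    · rw [Ne, ENNReal.ofReal_eq_zero, not_le]; positivity
  have hy0 : 0 < ‖y‖ := norm_pos_iff.2 hy
  calc _ ≤ ∫⁻ τ in Set.Ioi (0 : ℝ), ENNReal.ofReal (τ ^ (s / 2 - 1)) *
        ENNReal.ofReal ((τ + (t + ‖y‖ ^ 2)) ^ (-1 : ℝ)) := by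
        refine setLIntegral_mono' measurableSet_Ioi fun τ hτ => mul_le_mul' le_rfl ?_
        have hτ' : 0 < τ := hτ
        rw [← ofReal_norm, ← add_assoc]
        exact ENNReal.ofReal_le_ofReal (norm_heatKernel_zero_le (by positivity) y)
    _ ≤ _ := lintegral_rpow_mul_inv_le hs0 hs1 (by positivity)
    _ ≤ _ := by
        rw [← ofReal_norm, ← ENNReal.ofReal_inv_of_pos hy0, ← ENNReal.ofReal_mul (by positivity),
          mul_assoc]
        refine ENNReal.ofReal_le_ofReal (mul_le_mul_of_nonneg_left ?_ hc.le)
        rw [show s / 2 - 1 = (s - 1) / 2 + -(1 / 2) by ring, Real.rpow_add (by positivity)]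
        refine mul_le_mul ?_ ?_ (by positivity) (by positivity)
        · exact Real.rpow_le_rpow_of_nonpos ht (by nlinarith [sq_nonneg ‖y‖]) (by linarith)
        · have : ‖y‖⁻¹ = (‖y‖ ^ 2) ^ (-(1 / 2) : ℝ) := by
            rw [← Real.rpow_natCast, ← Real.rpow_mul hy0.le, ← Real.rpow_neg_one]
            norm_num
          rw [this]
          exact Real.rpow_le_rpow_of_nonpos (by positivity) (by linarith) (by norm_num)

theorem lintegral_heatKernel_one_le {s : ℝ} (hs0 : 0 < s) (hs1 : s ≤ 1) {t : ℝ} (ht : 0 < t)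
    (y : ℂ) :
    ∫⁻ τ in Set.Ioi (0 : ℝ), ENNReal.ofReal (τ ^ (s / 2 - 1)) * ‖heatKernel 1 (τ + t) y‖ₑ ≤
      ENNReal.ofReal ((1 / (s / 2) + 1 / (1 - s / 2)) * t ^ (s / 2 - 1)) * ‖y‖ₑ⁻¹ := by
  calc _ ≤ ∫⁻ τ in Set.Ioi (0 : ℝ), ENNReal.ofReal (τ ^ (s / 2 - 1)) *
        ENNReal.ofReal ((τ + t) ^ (-1 : ℝ)) * ‖y‖ₑ⁻¹ := by
        refine setLIntegral_mono' measurableSet_Ioi fun τ hτ => ?_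
        have hτ' : 0 < τ := hτ
        rw [mul_assoc]
        refine mul_le_mul' le_rfl ?_
        rcases eq_or_ne y 0 with rfl | hy
        · simp [heatKernel]
        have hy0 : 0 < ‖y‖ := norm_pos_iff.2 hy
        rw [← ofReal_norm, ← ofReal_norm, ← ENNReal.ofReal_inv_of_pos hy0,
          ← ENNReal.ofReal_mul (by positivity), Real.rpow_neg_one, mul_comm]
        exact ENNReal.ofReal_le_ofReal (norm_heatKernel_one_le (by positivity) y)
    _ = (∫⁻ τ in Set.Ioi (0 : ℝ), ENNReal.ofReal (τ ^ (s / 2 - 1)) *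
        ENNReal.ofReal ((τ + t) ^ (-1 : ℝ))) * ‖y‖ₑ⁻¹ := lintegral_mul_const _ (by fun_prop)
    _ ≤ _ := mul_le_mul' (lintegral_rpow_mul_inv_le hs0 hs1 ht) le_rfl

theorem measurable_lintegral_kernel (s : ℝ) {κ : ℝ → ℂ → ℂ}
    (hκm : Measurable (Function.uncurry κ)) :
    Measurable fun y : ℂ =>
      ∫⁻ τ in Set.Ioi (0 : ℝ), ENNReal.ofReal (τ ^ (s / 2 - 1)) * ‖κ τ y‖ₑ :=
  Measurable.lintegral_prod_left
    ((by fun_prop : Measurable fun p : ℝ × ℂ => ENNReal.ofReal (p.1 ^ (s / 2 - 1))).mul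
      hκm.enorm)

/-- Integrating first in space, a time superposition of kernels of mass `≤ c / (τ + t)`. -/
theorem lintegral_lintegral_kernel_le {s : ℝ} (hs0 : 0 < s) (hs1 : s ≤ 1) {t : ℝ} (ht : 0 < t)
    {κ : ℝ → ℂ → ℂ} (hκm : Measurable (Function.uncurry κ)) {c : ℝ} (hc : 0 ≤ c)
    (hκ : ∀ τ, 0 < τ → ∫⁻ y, ‖κ τ y‖ₑ ≤
      ENNReal.ofReal c * ENNReal.ofReal ((τ + t) ^ (-1 : ℝ))) :
    ∫⁻ y, ∫⁻ τ in Set.Ioi (0 : ℝ), ENNReal.ofReal (τ ^ (s / 2 - 1)) * ‖κ τ y‖ₑ ≤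
      ENNReal.ofReal ((1 / (s / 2) + 1 / (1 - s / 2)) * (c * t ^ (s / 2 - 1))) := by
  have hin : Measurable fun p : ℂ × ℝ => ENNReal.ofReal (p.2 ^ (s / 2 - 1)) * ‖κ p.2 p.1‖ₑ :=
    (by fun_prop : Measurable fun p : ℂ × ℝ => ENNReal.ofReal (p.2 ^ (s / 2 - 1))).mul
      (hκm.comp measurable_swap).enorm
  rw [lintegral_lintegral_swap hin.aemeasurable]
  calc _ ≤ ∫⁻ τ in Set.Ioi (0 : ℝ), ENNReal.ofReal c * (ENNReal.ofReal (τ ^ (s / 2 - 1)) *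
        ENNReal.ofReal ((τ + t) ^ (-1 : ℝ))) := by
        refine setLIntegral_mono' measurableSet_Ioi fun τ hτ => ?_
        have hκτ : Measurable (κ τ) := hκm.comp (measurable_const.prodMk measurable_id)
        rw [lintegral_const_mul _ hκτ.enorm, mul_left_comm]
        exact mul_le_mul' le_rfl (hκ τ hτ)
    _ = ENNReal.ofReal c * ∫⁻ τ in Set.Ioi (0 : ℝ), (ENNReal.ofReal (τ ^ (s / 2 - 1)) *
        ENNReal.ofReal ((τ + t) ^ (-1 : ℝ))) := lintegral_const_mul _ (by fun_prop)
    _ ≤ _ := mul_le_mul' le_rfl (lintegral_rpow_mul_inv_le hs0 hs1 ht)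
    _ = _ := by
        rw [← ENNReal.ofReal_mul hc]
        congr 1; ring

theorem eLpNorm_const_mul_ek_mul (c k : ℂ) (u : ℂ → ℂ) (p : ℝ≥0∞) :
    eLpNorm (fun z => c * (ek k z * u z)) p volume = ‖c‖ₑ * eLpNorm u p volume := by
  rw [← eLpNorm_const_smul]
  refine eLpNorm_congr_norm_ae (ae_of_all _ fun z => ?_)
  rw [norm_mul, norm_mul, norm_ek, one_mul, Pi.smul_apply, smul_eq_mul, norm_mul]

theorem stronglyMeasurable_dbarInv {h : ℂ → ℂ} (hh : Measurable h) :
    StronglyMeasurable (dbarInv h) := by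
  have hm : Measurable (Function.uncurry fun z w : ℂ => h w / (z - w)) := by
    unfold Function.uncurry; fun_prop
  exact hm.stronglyMeasurable.integral_prod_right.const_mul _

/-- Hardy–Littlewood–Sobolev for convolution with kernels bounded by `c / |y|`. -/
theorem eLpNorm_le_of_enorm_le_inv_kernel {p : ℝ} (hp : 2 < p) :
    ∃ C : ℝ, 0 < C ∧ ∀ (c : ℝ) (A : ℂ → ℝ≥0∞) (u v : ℂ → ℂ), 0 < c →
      (∀ y, A y ≤ ENNReal.ofReal c * ‖y‖ₑ⁻¹) → Measurable u → AEStronglyMeasurable v volume →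
      (∀ z, ‖v z‖ₑ ≤ ∫⁻ y, A y * ‖u (z - y)‖ₑ) →
      eLpNorm v (ENNReal.ofReal p) volume ≤
        ENNReal.ofReal (C * c) * eLpNorm u (ENNReal.ofReal (2 * p / (p + 2))) volume := by
  obtain ⟨C, hC, h⟩ := eLpNorm_le_of_enorm_le_riesz hp
  refine ⟨C, hC, fun c A u v hc hA hu hv hle => ?_⟩
  have hce : ‖(c : ℂ)‖ₑ = ENNReal.ofReal c := by
    rw [← ofReal_norm, Complex.norm_real, Real.norm_of_nonneg hc.le]
  refine (h ((c : ℂ) • u) v (hu.const_smul _) hv fun z => (hle z).trans ?_).trans (le_of_eq ?_)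
  · rw [← lintegral_sub_left_eq_self _ z]
    refine lintegral_mono fun w => ?_
    rw [sub_sub_cancel, Pi.smul_apply, smul_eq_mul, enorm_mul, hce]
    refine (mul_le_mul' (hA _) le_rfl).trans (le_of_eq ?_)
    ring
  · rw [eLpNorm_const_smul, hce, ENNReal.ofReal_mul hC.le, mul_assoc]

theorem eLpNorm_dbarInv_le {p : ℝ} (hp : 2 < p) :
    ∃ C : ℝ, 0 < C ∧ ∀ (k : ℂ) (u : ℂ → ℂ), Measurable u →
      eLpNorm (dbarInv fun w => ek k w * u w) (ENNReal.ofReal p) volume ≤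
        ENNReal.ofReal C * eLpNorm u (ENNReal.ofReal (2 * p / (p + 2))) volume := by
  obtain ⟨C, hC, h⟩ := eLpNorm_le_of_enorm_le_riesz hp
  refine ⟨C, hC, fun k u hu => h u _ hu ?_ fun z => ?_⟩
  · exact (stronglyMeasurable_dbarInv
      ((continuous_ek k).measurable.mul hu)).aestronglyMeasurable
  · have hpi : ‖(Real.pi : ℂ)⁻¹‖ₑ ≤ 1 := by
      rw [← ofReal_norm, norm_inv, Complex.norm_real, Real.norm_of_nonneg Real.pi_pos.le]
      exact ENNReal.ofReal_le_one.2 (inv_le_one_of_one_le₀ (by linarith [Real.pi_gt_three]))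
    rw [dbarInv, enorm_mul]
    refine (mul_le_mul' hpi (enorm_integral_le_lintegral_enorm _)).trans ?_
    rw [one_mul]
    refine lintegral_mono_ae ?_
    filter_upwards [compl_mem_ae_iff.2 (measure_singleton z)] with w hw
    have hne : z - w ≠ 0 := sub_ne_zero.2 (Ne.symm hw)
    rw [div_eq_mul_inv, enorm_mul, enorm_mul, enorm_inv hne]
    have : ‖ek k w‖ₑ = 1 := by rw [← ofReal_norm, norm_ek, ENNReal.ofReal_one]
    rw [this, one_mul]

/-- `∂̄^j` of the heat regularization of `G` at time `t`. -/
noncomputable def heatReg (t : ℝ) (G : 𝓢(ℂ, ℂ)) (j : ℕ) : ℂ → ℂ :=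
  cconv (heatKernel 0 t) (dbarS^[j] G)

theorem dbar_heatReg {t : ℝ} (ht : 0 < t) (G : 𝓢(ℂ, ℂ)) (j : ℕ) :
    dbar (heatReg t G j) = heatReg t G (j + 1) := by
  rw [heatReg, heatReg, dbar_cconv (integrable_heatKernel ht 0), Function.iterate_succ_apply']

theorem differentiable_heatReg {t : ℝ} (ht : 0 < t) (G : 𝓢(ℂ, ℂ)) (j : ℕ) :
    Differentiable ℝ (heatReg t G j) :=
  fun x => (hasFDerivAt_cconv (integrable_heatKernel ht 0) _ x).differentiableAt

theorem bddIntegrable_heatReg {t : ℝ} (ht : 0 < t) (G : 𝓢(ℂ, ℂ)) (j : ℕ) :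
    BddIntegrable (heatReg t G j) :=
  (SchwartzMap.bddIntegrable _).cconv (integrable_heatKernel ht 0)

theorem dbarInv_ek_mul_heatReg {t : ℝ} (ht : 0 < t) (G : 𝓢(ℂ, ℂ)) (j : ℕ) {k : ℂ} (hk : k ≠ 0)
    (z : ℂ) : dbarInv (fun w => ek (-k) w * heatReg t G j w) z =
      2 * I / k * (ek (-k) z * heatReg t G j z -
        dbarInv (fun w => ek (-k) w * heatReg t G (j + 1) w) z) := by
  rw [dbarInv_ek_mul hk (differentiable_heatReg ht G j) (bddIntegrable_heatReg ht G j)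
    (bddIntegrable_fderiv_cconv (integrable_heatKernel ht 0) _), dbar_heatReg ht]

theorem FT_dbarS_iterate (G : 𝓢(ℂ, ℂ)) (j : ℕ) (ξ : ℂ) :
    FT (dbarS^[j] G) ξ = (Real.pi * I * ξ) ^ j * FT G ξ := by
  induction j with
  | zero => simp
  | succ j ih =>
    rw [Function.iterate_succ_apply', coe_dbarS, FT_dbar (dbarS^[j] G).differentiable
      (dbarS^[j] G).integrable (fun v => ((dbarS^[j] G).bddIntegrable_fderiv v).1), ih]
    ring

theorem heatReg_eq_FTinv {t : ℝ} (ht : 0 < t) (G : 𝓢(ℂ, ℂ)) (j : ℕ) (x : ℂ) :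
    heatReg t G j x = FTinv (fun ξ => ((Real.pi * I * ξ) ^ j *
      (Real.exp (-(4 * Real.pi ^ 2 * ‖ξ‖ ^ 2 * t)) : ℝ)) * FT G ξ) x := by
  have hi : Integrable (FT (dbarS^[j] G)) := by
    rw [FT_schwartz]; exact SchwartzMap.integrable _
  rw [heatReg, ← FTinv_FT (dbarS^[j] G), cconv_FTinv (integrable_heatKernel ht 0) hi]
  congr 1
  ext ξ
  rw [FT_heatKernel ht, FT_dbarS_iterate]
  ring

theorem exp_heat_mem {t : ℝ} (ht : 0 < t) (ξ : ℂ) :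
    0 ≤ Real.exp (-(4 * Real.pi ^ 2 * ‖ξ‖ ^ 2 * t)) ∧
      Real.exp (-(4 * Real.pi ^ 2 * ‖ξ‖ ^ 2 * t)) ≤ 1 :=
  ⟨(Real.exp_pos _).le, Real.exp_le_one_iff.2 (neg_nonpos.2 (by positivity))⟩

theorem integrable_heatReg_symbol {t : ℝ} (ht : 0 < t) (G : 𝓢(ℂ, ℂ)) (j : ℕ) :
    Integrable fun ξ => ((Real.pi * I * ξ) ^ j *
      (Real.exp (-(4 * Real.pi ^ 2 * ‖ξ‖ ^ 2 * t)) : ℝ)) * FT G ξ := by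
  refine integrable_norm_pow_mul_FT G j _ (by fun_prop) (Real.pi ^ j) fun ξ => ?_
  obtain ⟨h0, h1⟩ := exp_heat_mem ht ξ
  rw [norm_mul, Complex.norm_real, Real.norm_of_nonneg h0, norm_pow, norm_mul, norm_mul, norm_I,
    Complex.norm_real, Real.norm_of_nonneg Real.pi_pos.le, mul_one, mul_pow]
  have hpi := Real.pi_pos
  calc Real.pi ^ j * ‖ξ‖ ^ j * Real.exp (-(4 * Real.pi ^ 2 * ‖ξ‖ ^ 2 * t))
      ≤ Real.pi ^ j * ‖ξ‖ ^ j := mul_le_of_le_one_right (by positivity) h1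
    _ ≤ _ := mul_le_mul_of_nonneg_left (by linarith) (by positivity)

theorem enorm_heatReg_le {s : ℝ} (hs0 : 0 < s) (hs1 : s ≤ 1) {t : ℝ} (ht : 0 < t)
    (G : 𝓢(ℂ, ℂ)) (j : ℕ) (x : ℂ) :
    ‖heatReg t G j x‖ₑ ≤
      ∫⁻ y, (ENNReal.ofReal ((2 * Real.pi) ^ s / Real.Gamma (s / 2)) *
        ∫⁻ τ in Set.Ioi (0 : ℝ), ENNReal.ofReal (τ ^ (s / 2 - 1)) * ‖heatKernel j (τ + t) y‖ₑ) *
          ‖Ds s G (x - y)‖ₑ := by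
  rw [heatReg_eq_FTinv ht]
  refine enorm_FTinv_mul_FT_le hs0 hs1 G (measurable_heatKernel_add j t)
    (fun τ hτ => integrable_heatKernel (by positivity) j) (by fun_prop) (fun τ hτ ξ => ?_)
    (integrable_heatReg_symbol ht G j) x
  rw [FT_heatKernel (by positivity), mul_add, neg_add, Real.exp_add]
  push_cast
  ring

theorem FT_sub {f g : ℂ → ℂ} (hf : Integrable f) (hg : Integrable g) (ξ : ℂ) :
    FT (fun z => f z - g z) ξ = FT f ξ - FT g ξ := by
  rw [FT_eq, FT_eq, FT_eq, ← integral_sub (integrable_ek_mul hf _) (integrable_ek_mul hg _)]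
  simp_rw [mul_sub]

theorem sub_heatReg_eq_FTinv {t : ℝ} (ht : 0 < t) (G : 𝓢(ℂ, ℂ)) (x : ℂ) :
    G x - heatReg t G 0 x = FTinv (fun ξ =>
      (1 - (Real.exp (-(4 * Real.pi ^ 2 * ‖ξ‖ ^ 2 * t)) : ℝ)) * FT G ξ) x := by
  have hi : Integrable (FT G) := by
    rw [FT_schwartz]; exact SchwartzMap.integrable _
  rw [heatReg_eq_FTinv ht, show G x = FTinv (FT G) x by rw [FTinv_FT], FTinv_eq, FTinv_eq, FTinv_eq, ← integral_sub (integrable_ek_mul hi _)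
    (integrable_ek_mul (integrable_heatReg_symbol ht G 0) _)]
  congr 1
  ext ξ
  ring

theorem enorm_sub_heatReg_le {s : ℝ} (hs0 : 0 < s) (hs1 : s ≤ 1) {t : ℝ} (ht : 0 < t)
    (G : 𝓢(ℂ, ℂ)) (x : ℂ) :
    ‖G x - heatReg t G 0 x‖ₑ ≤
      ∫⁻ y, (ENNReal.ofReal ((2 * Real.pi) ^ s / Real.Gamma (s / 2)) *
        ∫⁻ τ in Set.Ioi (0 : ℝ), ENNReal.ofReal (τ ^ (s / 2 - 1)) *
          ‖heatKernel 0 τ y - heatKernel 0 (τ + t) y‖ₑ) * ‖Ds s G (x - y)‖ₑ := by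
  rw [sub_heatReg_eq_FTinv ht]
  refine enorm_FTinv_mul_FT_le hs0 hs1 G (κ := fun τ y => heatKernel 0 τ y - heatKernel 0 (τ + t) y)
    ((measurable_heatKernel 0).sub (measurable_heatKernel_add 0 t))
    (fun τ hτ => (integrable_heatKernel hτ 0).sub (integrable_heatKernel (by positivity) 0))
    (by fun_prop) (fun τ hτ ξ => ?_) ?_ x
  · rw [FT_sub (integrable_heatKernel hτ 0) (integrable_heatKernel (by positivity) 0),
      FT_heatKernel hτ, FT_heatKernel (by positivity), mul_add, neg_add, Real.exp_add]
    push_cast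
    ring
  · refine integrable_norm_pow_mul_FT G 0 _ (by fun_prop) 1 fun ξ => ?_
    obtain ⟨h0, h1⟩ := exp_heat_mem ht ξ
    rw [← Complex.ofReal_one, ← Complex.ofReal_sub, Complex.norm_real,
      Real.norm_of_nonneg (by linarith)]
    simp only [pow_zero]
    linarith

theorem ofReal_mul_ofReal_mul {a b : ℝ} (ha : 0 ≤ a) (x : ℝ≥0∞) :
    ENNReal.ofReal a * (ENNReal.ofReal b * x) = ENNReal.ofReal (a * b) * x := by
  rw [ENNReal.ofReal_mul ha, mul_assoc]

/-- Bounds for the heat regularization of `G` at scale `√t`, in terms of `D^s G`. -/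
theorem eLpNorm_heatReg_le {s : ℝ} (hs0 : 0 < s) (hs1 : s ≤ 1) {p : ℝ} (hp : 2 < p) :
    ∃ K : ℝ, 0 < K ∧ ∀ (G : 𝓢(ℂ, ℂ)) (t : ℝ), 0 < t →
      (eLpNorm (heatReg t G 0) (ENNReal.ofReal p) volume ≤
        ENNReal.ofReal (K * t ^ ((s - 1) / 2)) *
          eLpNorm (Ds s G) (ENNReal.ofReal (2 * p / (p + 2))) volume) ∧
      (eLpNorm (heatReg t G 1) (ENNReal.ofReal p) volume ≤
        ENNReal.ofReal (K * t ^ (s / 2 - 1)) *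
          eLpNorm (Ds s G) (ENNReal.ofReal (2 * p / (p + 2))) volume) ∧
      (eLpNorm (heatReg t G 2) (ENNReal.ofReal (2 * p / (p + 2))) volume ≤
        ENNReal.ofReal (K * t ^ (s / 2 - 1)) *
          eLpNorm (Ds s G) (ENNReal.ofReal (2 * p / (p + 2))) volume) ∧
      (eLpNorm (fun z => G z - heatReg t G 0 z) (ENNReal.ofReal (2 * p / (p + 2))) volume ≤
        ENNReal.ofReal (K * t ^ (s / 2)) *
          eLpNorm (Ds s G) (ENNReal.ofReal (2 * p / (p + 2))) volume) := by
  obtain ⟨H, hH, hls⟩ := eLpNorm_le_of_enorm_le_inv_kernel hp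
  have hpi := Real.pi_pos
  have hΓ := Real.Gamma_pos_of_pos (by linarith : 0 < s / 2)
  set c : ℝ := (2 * Real.pi) ^ s / Real.Gamma (s / 2)
  have hc : 0 < c := by positivity
  set A : ℝ := 1 / (s / 2) + 1 / (1 - s / 2)
  have hA : 0 < A := by
    have : 0 < 1 - s / 2 := by linarith
    positivity
  have hq : 1 < 2 * p / (p + 2) := (one_lt_div (by linarith)).2 (by linarith)
  refine ⟨(H + 2) * (c * A), by positivity, fun G t ht => ⟨?_, ?_, ?_, ?_⟩⟩
  all_goals have hF := (continuous_Ds hs0.le hs1 G).measurable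
  · refine (hls (c * (A * t ^ ((s - 1) / 2))) _ _ _ (by positivity) (fun y => ?_) hF
      (differentiable_heatReg ht G 0).continuous.aestronglyMeasurable
      (enorm_heatReg_le hs0 hs1 ht G 0)).trans (mul_le_mul' (ENNReal.ofReal_le_ofReal ?_) le_rfl)
    · rw [← ofReal_mul_ofReal_mul hc.le]
      exact mul_le_mul' le_rfl (lintegral_heatKernel_zero_le hs0 hs1 ht y)
    · have : 0 ≤ c * A * t ^ ((s - 1) / 2) := by positivity
      nlinarith
  · refine (hls (c * (A * t ^ (s / 2 - 1))) _ _ _ (by positivity) (fun y => ?_) hF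
      (differentiable_heatReg ht G 1).continuous.aestronglyMeasurable
      (enorm_heatReg_le hs0 hs1 ht G 1)).trans (mul_le_mul' (ENNReal.ofReal_le_ofReal ?_) le_rfl)
    · rw [← ofReal_mul_ofReal_mul hc.le]
      exact mul_le_mul' le_rfl (lintegral_heatKernel_one_le hs0 hs1 ht y)
    · have : 0 ≤ c * A * t ^ (s / 2 - 1) := by positivity
      nlinarith [mul_nonneg hH.le this]
  · have hm := measurable_heatKernel_add 2 t
    refine (eLpNorm_le_of_enorm_le_lintegral_mul hq
      (measurable_const.mul (measurable_lintegral_kernel s hm)) hF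
      (enorm_heatReg_le hs0 hs1 ht G 2)).trans (mul_le_mul' ?_ le_rfl)
    simp only [Pi.mul_apply]
    rw [lintegral_const_mul _ (measurable_lintegral_kernel s hm)]
    change ENNReal.ofReal c * _ ≤ _
    refine (mul_le_mul' le_rfl (lintegral_lintegral_kernel_le hs0 hs1 ht hm zero_le_one
      fun τ hτ => ?_)).trans ?_
    · rw [ENNReal.ofReal_one, one_mul]
      exact lintegral_enorm_heatKernel_two_le (by positivity)
    · rw [← ENNReal.ofReal_mul hc.le]
      refine ENNReal.ofReal_le_ofReal ?_
      change c * (A * _) ≤ _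
      have : 0 ≤ c * A * t ^ (s / 2 - 1) := by positivity
      nlinarith [mul_nonneg hH.le this]
  · have hm : Measurable (Function.uncurry fun τ y => heatKernel 0 τ y - heatKernel 0 (τ + t) y) :=
      (measurable_heatKernel 0).sub (measurable_heatKernel_add 0 t)
    refine (eLpNorm_le_of_enorm_le_lintegral_mul hq
      (measurable_const.mul (measurable_lintegral_kernel s hm)) hF
      (enorm_sub_heatReg_le hs0 hs1 ht G)).trans (mul_le_mul' ?_ le_rfl)
    simp only [Pi.mul_apply]
    rw [lintegral_const_mul _ (measurable_lintegral_kernel s hm)]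
    change ENNReal.ofReal c * _ ≤ _
    refine (mul_le_mul' le_rfl (lintegral_lintegral_kernel_le hs0 hs1 ht hm
      (by positivity : 0 ≤ 2 * t) fun τ hτ => lintegral_enorm_heatKernel_sub_le hτ ht)).trans ?_
    rw [← ENNReal.ofReal_mul hc.le]
    refine ENNReal.ofReal_le_ofReal ?_
    have e : t * t ^ (s / 2 - 1) = t ^ (s / 2) := by
      rw [Real.rpow_sub_one ht.ne']; field_simp
    have : 0 ≤ c * A * t ^ (s / 2) := by positivity
    change c * (A * _) ≤ _
    rw [mul_assoc 2 t, e]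
    nlinarith [mul_nonneg hH.le this]

theorem dbarInv_ek_mul_eq_heatReg {t : ℝ} (ht : 0 < t) (G : 𝓢(ℂ, ℂ)) {k : ℂ} (hk : k ≠ 0) :
    (dbarInv fun w => ek (-k) w * G w) =
      (dbarInv fun w => ek (-k) w * (G w - heatReg t G 0 w)) +
        ((fun z => (2 * I / k) * (ek (-k) z * heatReg t G 0 z)) +
          ((fun z => (-(2 * I / k) ^ 2) * (ek (-k) z * heatReg t G 1 z)) +
            ((2 * I / k) ^ 2 • dbarInv fun w => ek (-k) w * heatReg t G 2 w))) := by
  ext z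
  have h0 := (bddIntegrable_heatReg ht G 0).ek_mul (-k)
  have h1 : BddIntegrable fun w => ek (-k) w * (G w - heatReg t G 0 w) := by
    have := (G.bddIntegrable.add ((bddIntegrable_heatReg ht G 0).const_mul (-1))).ek_mul (-k)
    refine (funext fun w => ?_ : _ = fun w => ek (-k) w * (G w - heatReg t G 0 w)) ▸ this
    ring
  have h2 := dbarInv_add h1 h0 z
  have e : (fun w => ek (-k) w * (G w - heatReg t G 0 w) + ek (-k) w * heatReg t G 0 w) =
      fun w => ek (-k) w * G w := by ext w; ring
  rw [e, dbarInv_ek_mul_heatReg ht G 0 hk, dbarInv_ek_mul_heatReg ht G 1 hk] at h2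
  simp only [Pi.add_apply, Pi.smul_apply, smul_eq_mul, h2]
  ring

theorem rpow_neg_le_two_mul {s : ℝ} (hs0 : 0 ≤ s) (hs1 : s ≤ 1) {r x : ℝ}
    (hx : 1 + x ≤ 2 * r) (hx0 : 0 ≤ x) : r ^ (-s) ≤ 2 * (1 + x) ^ (-s) := by
  have h1 : r ^ (-s) ≤ ((1 + x) / 2) ^ (-s) :=
    Real.rpow_le_rpow_of_nonpos (by linarith) (by linarith) (by linarith)
  refine h1.trans ?_
  rw [Real.div_rpow (by linarith) (by norm_num), Real.rpow_neg zero_le_two s, div_inv_eq_mul,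
    mul_comm]
  refine mul_le_mul_of_nonneg_right ?_ (by positivity)
  calc (2 : ℝ) ^ s ≤ 2 ^ (1 : ℝ) := Real.rpow_le_rpow_of_exponent_le (by norm_num) hs1
    _ = 2 := Real.rpow_one 2

theorem eLpNorm_dbarInv_ek_mul_le {s : ℝ} (hs0 : 0 < s) (hs1 : s ≤ 1) {p : ℝ} (hp : 2 < p) :
    ∃ C : ℝ, 0 < C ∧ ∀ (G : 𝓢(ℂ, ℂ)) (k : ℂ), k ≠ 0 →
      eLpNorm (dbarInv fun z => ek (-k) z * G z) (ENNReal.ofReal p) volume ≤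
        ENNReal.ofReal (C * ‖k‖ ^ (-s)) *
          eLpNorm (Ds s G) (ENNReal.ofReal (2 * p / (p + 2))) volume := by
  obtain ⟨H, hH, hls⟩ := eLpNorm_dbarInv_le hp
  obtain ⟨K, hK, hreg⟩ := eLpNorm_heatReg_le hs0 hs1 hp
  refine ⟨H * K + (2 * K + (4 * K + 4 * (H * K))), by positivity, fun G k hk => ?_⟩
  have hr : 0 < ‖k‖ := norm_pos_iff.2 hk
  have ht : 0 < ‖k‖ ^ (-2 : ℝ) := by positivity
  have hp1 : 1 ≤ ENNReal.ofReal p := ENNReal.one_le_ofReal.2 (by linarith)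
  obtain ⟨E0, E1, E2, E3⟩ := hreg G _ ht
  rw [← Real.rpow_mul hr.le] at E0 E1 E2 E3
  rw [show -2 * ((s - 1) / 2) = -s + 1 by ring, Real.rpow_add_one hr.ne'] at E0
  rw [show -2 * (s / 2 - 1) = -s + 2 by ring, Real.rpow_add hr, Real.rpow_two] at E1 E2
  rw [show -2 * (s / 2) = -s by ring] at E3
  have hu : ∀ j, Measurable (heatReg (‖k‖ ^ (-2 : ℝ)) G j) := fun j =>
    (differentiable_heatReg ht G j).continuous.measurable
  have hd := hls (-k) _ (hu 2)
  have hd' := hls (-k) _ (G.continuous.measurable.sub (hu 0))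
  have hek : Measurable (ek (-k)) := (continuous_ek (-k)).measurable
  have m1 := (stronglyMeasurable_dbarInv (hek.mul
    (G.continuous.measurable.sub (hu 0)))).aestronglyMeasurable (μ := volume)
  have m2 : AEStronglyMeasurable
      (fun z => (2 * I / k) * (ek (-k) z * heatReg (‖k‖ ^ (-2 : ℝ)) G 0 z)) volume :=
    ((hek.mul (hu 0)).const_mul _).aestronglyMeasurable
  have m3 : AEStronglyMeasurable
      (fun z => (-(2 * I / k) ^ 2) * (ek (-k) z * heatReg (‖k‖ ^ (-2 : ℝ)) G 1 z)) volume :=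
    ((hek.mul (hu 1)).const_mul _).aestronglyMeasurable
  have m4 : AEStronglyMeasurable ((2 * I / k) ^ 2 • dbarInv fun w =>
      ek (-k) w * heatReg (‖k‖ ^ (-2 : ℝ)) G 2 w) volume :=
    (stronglyMeasurable_dbarInv (hek.mul (hu 2))).aestronglyMeasurable.const_smul _
  have ha : ‖2 * I / k‖ₑ = ENNReal.ofReal (2 / ‖k‖) := by
    rw [← ofReal_norm]; simp
  have ha2 : ‖(2 * I / k) ^ 2‖ₑ = ENNReal.ofReal (4 / ‖k‖ ^ 2) := by
    rw [← ofReal_norm]; simp [div_pow]; norm_num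
  set N := eLpNorm (Ds s G) (ENNReal.ofReal (2 * p / (p + 2))) volume
  rw [dbarInv_ek_mul_eq_heatReg ht G hk]
  refine (eLpNorm_add_le m1 (m2.add (m3.add m4)) hp1).trans ?_
  refine (add_le_add le_rfl ((eLpNorm_add_le m2 (m3.add m4) hp1).trans
    (add_le_add le_rfl (eLpNorm_add_le m3 m4 hp1)))).trans ?_
  rw [eLpNorm_const_mul_ek_mul, eLpNorm_const_mul_ek_mul, eLpNorm_const_smul, enorm_neg, ha, ha2]
  set ρ := ‖k‖ ^ (-s)
  have hρ : 0 ≤ ρ := by positivity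
  have F1 := hd'.trans (mul_le_mul' (le_refl (ENNReal.ofReal H)) E3)
  have F2 := mul_le_mul' (le_refl (ENNReal.ofReal (2 / ‖k‖))) E0
  have F3 := mul_le_mul' (le_refl (ENNReal.ofReal (4 / ‖k‖ ^ 2))) E1
  have F4 := mul_le_mul' (le_refl (ENNReal.ofReal (4 / ‖k‖ ^ 2)))
    (hd.trans (mul_le_mul' (le_refl (ENNReal.ofReal H)) E2))
  rw [ofReal_mul_ofReal_mul (by positivity)] at F1 F2 F3
  rw [ofReal_mul_ofReal_mul hH.le, ofReal_mul_ofReal_mul (by positivity)] at F4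
  refine (add_le_add F1 (add_le_add F2 (add_le_add F3 F4))).trans (le_of_eq ?_)
  rw [← add_mul, ← add_mul, ← add_mul, ← ENNReal.ofReal_add (by positivity) (by positivity),
    ← ENNReal.ofReal_add (by positivity) (by positivity),
    ← ENNReal.ofReal_add (by positivity) (by positivity)]
  congr 2
  field_simp

/-- Estimate \eqref{isitgood0}:
`‖∂̄⁻¹[e_{-k} G]‖_p ≤ C (1+|k|)^{-s} (‖G‖_{2p/(p+2)} + ‖D^s G‖_{2p/(p+2)})`. -/
theorem stmt3 (s : ℝ) (hs0 : 0 ≤ s) (hs1 : s ≤ 1) (p : ℝ) (hp : 2 < p) :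
    ∃ C : ℝ, 0 < C ∧ ∀ (G : 𝓢(ℂ, ℂ)) (k : ℂ),
      eLpNorm (dbarInv fun z => ek (-k) z * G z) (ENNReal.ofReal p) volume ≤
        ENNReal.ofReal (C * (1 + ‖k‖) ^ (-s)) *
          (eLpNorm (⇑G) (ENNReal.ofReal (2 * p / (p + 2))) volume +
            eLpNorm (Ds s (⇑G)) (ENNReal.ofReal (2 * p / (p + 2))) volume) := by
  obtain ⟨H, hH, hls⟩ := eLpNorm_dbarInv_le hp
  have low : ∀ (G : 𝓢(ℂ, ℂ)) (k : ℂ) (C : ℝ), H ≤ C * (1 + ‖k‖) ^ (-s) →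
      eLpNorm (dbarInv fun z => ek (-k) z * G z) (ENNReal.ofReal p) volume ≤
        ENNReal.ofReal (C * (1 + ‖k‖) ^ (-s)) *
          (eLpNorm (⇑G) (ENNReal.ofReal (2 * p / (p + 2))) volume +
            eLpNorm (Ds s (⇑G)) (ENNReal.ofReal (2 * p / (p + 2))) volume) := fun G k C h =>
    (hls (-k) G G.continuous.measurable).trans
      (mul_le_mul' (ENNReal.ofReal_le_ofReal h) le_self_add)
  rcases hs0.eq_or_lt with rfl | hs
  · exact ⟨H, hH, fun G k => low G k H (by simp)⟩
  obtain ⟨K, hK, hhigh⟩ := eLpNorm_dbarInv_ek_mul_le hs hs1 hp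
  refine ⟨2 * H + 2 * K, by positivity, fun G k => ?_⟩
  have hpos : 0 < (1 + ‖k‖) ^ (-s) := by positivity
  rcases le_total ‖k‖ 1 with hk | hk
  · refine low G k _ ?_
    have := rpow_neg_le_two_mul hs0 hs1 (by linarith : 1 + ‖k‖ ≤ 2 * 1) (norm_nonneg k)
    rw [Real.one_rpow] at this
    nlinarith
  · refine (hhigh G k (norm_pos_iff.1 (by linarith))).trans
      (mul_le_mul' (ENNReal.ofReal_le_ofReal ?_) le_add_self)
    have := rpow_neg_le_two_mul hs0 hs1 (by linarith : 1 + ‖k‖ ≤ 2 * ‖k‖) (norm_nonneg k)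
    nlinarith
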